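/- arXiv:2209.11149 — 8 statements merged into one kernel-verified Lean document; each statement's English description precedes it below -/
import Mathlib

section
/- Let n ≥ 1, let Ω ⊆ ℝⁿ be open, let X, Y : Ω → ℝⁿ be smooth (C^∞), and let x̄ ∈ Ω be a point with ⟨X(x̄), Y(x̄)⟩ > 0 (Euclidean inner product). Then there exists an open neighbourhood U ⊆ Ω of x̄ and a smooth map G : U → Matrix (Fin n) (Fin n) ℝ such that G(x) is symmetric and positive definite for every x ∈ U, and X(x) = G(x) · Y(x) (matrix–vector multiplication) for all x ∈ U. -/
/-!
Where `⟨X, Y⟩ > 0`, take for `G` the sum of the orthogonal projection onto the complement of `Y` and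
the rank-one matrix `⟨X, Y⟩⁻¹ X Xᵀ`: the first term kills `Y` and the second sends `Y` to `X`. The
sum of these positive semidefinite matrices is positive definite because it is injective: if
`G v = 0`, pairing with `Y` gives `⟨X, v⟩ = 0`, so `v` is also killed by the projection, that is,
`v` is a multiple of `Y`; then `⟨X, v⟩ = 0` and `⟨X, Y⟩ > 0` force `v = 0`.
-/

open Matrix

section LinearAlgebra

open scoped ComplexOrder MatrixOrder

variable {𝕜 ι : Type*} [RCLike 𝕜] [Fintype ι]

/-- The orthogonal projection onto the line spanned by `y`. For `y = 0` the convention `0⁻¹ = 0`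
makes it the zero matrix, as it should be. -/
def lineProjection (y : ι → 𝕜) : Matrix ι ι 𝕜 :=
  (star y ⬝ᵥ y)⁻¹ • vecMulVec y (star y)

theorem lineProjection_mulVec (y v : ι → 𝕜) :
    lineProjection y *ᵥ v = ((star y ⬝ᵥ y)⁻¹ * (star y ⬝ᵥ v)) • y := by
  rw [lineProjection, smul_mulVec, vecMulVec_mulVec, op_smul_eq_smul, smul_smul]

theorem lineProjection_mulVec_self (y : ι → 𝕜) : lineProjection y *ᵥ y = y := by
  obtain rfl | hy := eq_or_ne y 0
  · exact mulVec_zero _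
  · rw [lineProjection_mulVec, inv_mul_cancel₀ (dotProduct_star_self_eq_zero.not.mpr hy), one_smul]

theorem isHermitian_lineProjection (y : ι → 𝕜) : (lineProjection y).IsHermitian := by
  rw [IsHermitian, lineProjection, conjTranspose_smul, conjTranspose_vecMulVec, star_inv₀,
    ← star_dotProduct, star_star]

theorem star_dotProduct_lineProjection_mulVec (y v : ι → 𝕜) :
    star y ⬝ᵥ (lineProjection y *ᵥ v) = star y ⬝ᵥ v := by
  rw [dotProduct_mulVec, ← (isHermitian_lineProjection y).eq, ← star_mulVec,
    lineProjection_mulVec_self]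

theorem isStarProjection_lineProjection (y : ι → 𝕜) : IsStarProjection (lineProjection y) where
  isIdempotentElem := by
    refine mulVec_injective (funext fun v ↦ ?_)
    rw [← mulVec_mulVec, lineProjection_mulVec y v, mulVec_smul, lineProjection_mulVec_self]
  isSelfAdjoint := isHermitian_lineProjection y

variable [DecidableEq ι]

/-- The BFGS update of the identity matrix: for `star x ⬝ᵥ y > 0`, a positive definite solution `G`
of the secant equation `G y = x`. -/
def bfgsUpdate (x y : ι → 𝕜) : Matrix ι ι 𝕜 :=
  (1 - lineProjection y) + (star x ⬝ᵥ y)⁻¹ • vecMulVec x (star x)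

theorem bfgsUpdate_mulVec (x y v : ι → 𝕜) :
    bfgsUpdate x y *ᵥ v =
      (v - lineProjection y *ᵥ v) + ((star x ⬝ᵥ y)⁻¹ * (star x ⬝ᵥ v)) • x := by
  rw [bfgsUpdate, add_mulVec, sub_mulVec, one_mulVec, smul_mulVec, vecMulVec_mulVec,
    op_smul_eq_smul, smul_smul]

theorem bfgsUpdate_mulVec_self {x y : ι → 𝕜} (hxy : star x ⬝ᵥ y ≠ 0) :
    bfgsUpdate x y *ᵥ y = x := by
  rw [bfgsUpdate_mulVec, lineProjection_mulVec_self, sub_self, zero_add, inv_mul_cancel₀ hxy,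
    one_smul]

theorem posSemidef_bfgsUpdate {x y : ι → 𝕜} (hxy : 0 ≤ star x ⬝ᵥ y) :
    (bfgsUpdate x y).PosSemidef :=
  (isStarProjection_lineProjection y).one_sub_nonneg.posSemidef.add
    ((posSemidef_vecMulVec_self_star x).smul (inv_nonneg.mpr hxy))

theorem bfgsUpdate_mulVec_injective {x y : ι → 𝕜} (hxy : star x ⬝ᵥ y ≠ 0) :
    Function.Injective (bfgsUpdate x y).mulVec := by
  refine (injective_iff_map_eq_zero (bfgsUpdate x y).mulVecLin).mpr fun v hv ↦ ?_
  rw [mulVecLin_apply, bfgsUpdate_mulVec] at hv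
  have hyx : star y ⬝ᵥ x ≠ 0 := by rwa [← star_star x, star_dotProduct_star, star_ne_zero]
  have hxv : star x ⬝ᵥ v = 0 := by
    have hpair := congrArg (star y ⬝ᵥ ·) hv
    simpa [dotProduct_add, dotProduct_sub, star_dotProduct_lineProjection_mulVec, hxy, hyx]
      using hpair
  have hv_line : v = lineProjection y *ᵥ v := by simpa [hxv, sub_eq_zero] using hv
  rw [lineProjection_mulVec] at hv_line
  have hcoeff : (star y ⬝ᵥ y)⁻¹ * (star y ⬝ᵥ v) = 0 := by
    rw [hv_line, dotProduct_smul, smul_eq_mul] at hxv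
    exact (mul_eq_zero.mp hxv).resolve_right hxy
  rw [hv_line, hcoeff, zero_smul]

theorem posDef_bfgsUpdate {x y : ι → 𝕜} (hxy : 0 < star x ⬝ᵥ y) : (bfgsUpdate x y).PosDef :=
  (posSemidef_bfgsUpdate hxy.le).posDef_iff_isUnit.mpr
    (mulVec_injective_iff_isUnit.mp (bfgsUpdate_mulVec_injective hxy.ne'))

end LinearAlgebra

section Smoothness

section NormedField

variable {𝕜 E m n : Type*} [NontriviallyNormedField 𝕜] [NormedAddCommGroup E] [NormedSpace 𝕜 E]
  [Fintype m] [Fintype n] {k : WithTop ℕ∞} {s : Set E}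

theorem contDiffOn_dotProduct {X Y : E → n → 𝕜} (hX : ContDiffOn 𝕜 k X s)
    (hY : ContDiffOn 𝕜 k Y s) : ContDiffOn 𝕜 k (fun x ↦ X x ⬝ᵥ Y x) s :=
  ContDiffOn.sum fun i _ ↦ (contDiffOn_pi.mp hX i).mul (contDiffOn_pi.mp hY i)

theorem contDiffOn_vecMulVec_apply {X : E → m → 𝕜} {Y : E → n → 𝕜} (hX : ContDiffOn 𝕜 k X s)
    (hY : ContDiffOn 𝕜 k Y s) (i : m) (j : n) :
    ContDiffOn 𝕜 k (fun x ↦ vecMulVec (X x) (Y x) i j) s :=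
  (contDiffOn_pi.mp hX i).mul (contDiffOn_pi.mp hY j)

end NormedField

variable {E ι : Type*} [NormedAddCommGroup E] [NormedSpace ℝ E] [Fintype ι]
  {k : WithTop ℕ∞} {s : Set E} {X Y : E → ι → ℝ}

theorem contDiffOn_bfgsUpdate_apply [DecidableEq ι] (hX : ContDiffOn ℝ k X s)
    (hY : ContDiffOn ℝ k Y s) (hXY : ∀ x ∈ s, X x ⬝ᵥ Y x ≠ 0) (i j : ι) :
    ContDiffOn ℝ k (fun x ↦ bfgsUpdate (X x) (Y x) i j) s := by
  have hYY : ∀ x ∈ s, Y x ⬝ᵥ Y x ≠ 0 := fun x hx h ↦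
    hXY x hx (by rw [dotProduct_self_eq_zero.mp h, dotProduct_zero])
  have hproj : ContDiffOn ℝ k (fun x ↦ lineProjection (Y x) i j) s :=
    ((contDiffOn_dotProduct hY hY).inv hYY).mul (contDiffOn_vecMulVec_apply hY hY i j)
  exact (contDiffOn_const.sub hproj).add
    (((contDiffOn_dotProduct hX hY).inv hXY).mul (contDiffOn_vecMulVec_apply hX hX i j))

theorem local_metric_noncritical_general (hs : IsOpen s) (hX : ContDiffOn ℝ k X s)
    (hY : ContDiffOn ℝ k Y s) :
    IsOpen {x ∈ s | 0 < X x ⬝ᵥ Y x} ∧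
      ∃ G : E → Matrix ι ι ℝ,
        (∀ i j, ContDiffOn ℝ k (fun x ↦ G x i j) {x ∈ s | 0 < X x ⬝ᵥ Y x}) ∧
        (∀ x ∈ {x ∈ s | 0 < X x ⬝ᵥ Y x}, (G x).PosDef) ∧
        (∀ x ∈ {x ∈ s | 0 < X x ⬝ᵥ Y x}, X x = G x *ᵥ Y x) := by
  classical
  have hsub : {x ∈ s | 0 < X x ⬝ᵥ Y x} ⊆ s := Set.sep_subset _ _
  refine ⟨(contDiffOn_dotProduct hX hY).continuousOn.isOpen_inter_preimage hs isOpen_Ioi,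
    fun x ↦ bfgsUpdate (X x) (Y x), ?_, fun x hx ↦ posDef_bfgsUpdate hx.2,
    fun x hx ↦ (bfgsUpdate_mulVec_self hx.2.ne').symm⟩
  exact contDiffOn_bfgsUpdate_apply (hX.mono hsub) (hY.mono hsub) fun x hx ↦ hx.2.ne'

end Smoothness

/-- **Local existence of a metric around a non-critical point.**
Let `n ≥ 1`, `Ω ⊆ ℝⁿ` open, `X Y : Ω → ℝⁿ` smooth, and `x₀ ∈ Ω` with `⟨X x₀, Y x₀⟩ > 0`.
Then there is an open neighbourhood `U ⊆ Ω` of `x₀` and a smooth map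
`G : U → Matrix (Fin n) (Fin n) ℝ` with `G x` symmetric positive definite and
`X x = G x * Y x` for all `x ∈ U`. -/
theorem local_metric_noncritical
    (n : ℕ) (hn : 1 ≤ n) (Ω : Set (Fin n → ℝ)) (hΩ : IsOpen Ω)
    (X Y : (Fin n → ℝ) → (Fin n → ℝ))
    (hX : ContDiffOn ℝ (⊤ : ℕ∞) X Ω) (hY : ContDiffOn ℝ (⊤ : ℕ∞) Y Ω)
    (x₀ : Fin n → ℝ) (hx₀ : x₀ ∈ Ω)
    (hpos : 0 < ∑ i, X x₀ i * Y x₀ i) :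
    ∃ U : Set (Fin n → ℝ), U ⊆ Ω ∧ IsOpen U ∧ x₀ ∈ U ∧
      ∃ G : (Fin n → ℝ) → Matrix (Fin n) (Fin n) ℝ,
        (∀ i j, ContDiffOn ℝ (⊤ : ℕ∞) (fun x => G x i j) U) ∧
        (∀ x ∈ U, (G x).PosDef) ∧
        (∀ x ∈ U, X x = (G x).mulVec (Y x)) := by
  obtain ⟨hopen, hG⟩ := local_metric_noncritical_general hΩ hX hY
  exact ⟨_, Set.sep_subset _ _, hopen, ⟨hx₀, hpos⟩, hG⟩
end

section
/- Let n ≥ 1, let Ω ⊆ ℝⁿ be open, and let X, Y : Ω → ℝⁿ be real-analytic on Ω. Let x̄ ∈ Ω satisfy X(x̄) = 0 and Y(x̄) = 0, and assume the Fréchet derivative DY(x̄) : ℝⁿ → ℝⁿ is invertible. Assume there exists a symmetric positive definite matrix Ḡ ∈ Matrix (Fin n) (Fin n) ℝ such that DX(x̄) v = Ḡ · (DY(x̄) v) for all v ∈ ℝⁿ. Then there exists an open neighbourhood U ⊆ Ω of x̄ and a smooth map G : U → Matrix (Fin n) (Fin n) ℝ such that G(x) is symmetric and positive definite for every x ∈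 U, and X(x) = G(x) · Y(x) for all x ∈ U. -/
/-!
Since `DY(x₀)` is invertible, `Y` is a local analytic coordinate and `X = Φ ∘ Y` near `x₀`. Reading
the values of `X` as covectors, Taylor expansion with remainder gives
`Φ z = Ḡ z + C(z)(z, z)` with `C(z)` trilinear, and the task is to choose the remainder so that
`Ḡ + C(z)(z, ·)` is a symmetric bilinear form. Any `C(z)` can be replaced by another trilinear form
that agrees with it on `(z, z, ·)`, and Koszul's rearrangement finds one that is symmetric in its
last two slots. Positivity persists near `x₀` because it is an open condition.
-/

open Filter Topology
open scoped ContDiff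
open ContinuousLinearMap (flipₗᵢ compL)

set_option maxSynthPendingDepth 3

section Hadamard

variable {𝕜 E F : Type*} [NontriviallyNormedField 𝕜] [NormedAddCommGroup E] [NormedSpace 𝕜 E]
  [NormedAddCommGroup F] [NormedSpace 𝕜 F]

theorem shift_unshift (p : FormalMultilinearSeries 𝕜 E F) :
    p.shift.unshift (p 0 0) = p := by
  ext1 n
  cases n with
  | zero => exact (continuousMultilinearCurryFin0 𝕜 E F).symm_apply_apply (p 0)
  | succ n => exact (continuousMultilinearCurryRightEquiv' 𝕜 n E F).symm_apply_apply (p (n + 1))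

theorem exists_analyticAt_eventually_eq_add_apply_sub [CompleteSpace F] {f : E → F} {x₀ : E}
    (hf : AnalyticAt 𝕜 f x₀) :
    ∃ A : E → E →L[𝕜] F, AnalyticAt 𝕜 A x₀ ∧ A x₀ = fderiv 𝕜 f x₀ ∧
      ∀ᶠ x in 𝓝 x₀, f x = f x₀ + A x (x - x₀) := by
  obtain ⟨p, hp⟩ := hf
  have hA : HasFPowerSeriesAt (fun x ↦ p.shift.sum (x - x₀)) p.shift x₀ := by
    have hr : 0 < p.shift.radius := p.radius_shift.symm ▸ hp.radius_pos
    simpa using (p.shift.hasFPowerSeriesOnBall hr).hasFPowerSeriesAt.comp_sub x₀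
  have hfA : ∀ᶠ x in 𝓝 x₀, f x = f x₀ + p.shift.sum (x - x₀) (x - x₀) := by
    obtain ⟨r, hr⟩ := hA
    have h := hr.unshift (z := p 0 0)
    rw [shift_unshift, hp.coeff_zero] at h
    filter_upwards [hp.eventually_hasSum_sub, h.hasFPowerSeriesAt.eventually_hasSum_sub]
      with x hx hx' using hx.unique hx'
  refine ⟨_, hA.analyticAt, ?_, hfA⟩
  have hd := ((hA.analyticAt.differentiableAt.hasFDerivAt.clm_apply
    ((hasFDerivAt_id x₀).sub_const x₀)).const_add (f x₀)).congr_of_eventuallyEq hfA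
  ext v
  simp [hd.fderiv]

end Hadamard

section Koszul

variable (𝕜 F : Type*) [NontriviallyNormedField 𝕜] [NormedAddCommGroup F] [NormedSpace 𝕜 F]

/-- The rearrangement that gives the Christoffel symbols from the first derivatives of a metric
(Koszul's formula), applied to the symmetrization `b y u v + b u y v` of a curried trilinear form
`b`. The result is symmetric in its last two slots and agrees with `b` on arguments `y y v`. -/
noncomputable def koszulMap :
    (F →L[𝕜] F →L[𝕜] F →L[𝕜] 𝕜) →L[𝕜] F →L[𝕜] F →L[𝕜] F →L[𝕜] 𝕜 :=
  let σ : (F →L[𝕜] F →L[𝕜] F →L[𝕜] 𝕜) →L[𝕜] F →L[𝕜] F →L[𝕜] F →L[𝕜] 𝕜 :=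
    flipₗᵢ 𝕜 F F (F →L[𝕜] 𝕜)
  let τ : (F →L[𝕜] F →L[𝕜] F →L[𝕜] 𝕜) →L[𝕜] F →L[𝕜] F →L[𝕜] F →L[𝕜] 𝕜 :=
    compL 𝕜 F _ _ (flipₗᵢ 𝕜 F F 𝕜)
  (2⁻¹ : 𝕜) • ((1 + τ - σ * τ) * (1 + σ))

variable {𝕜 F}

theorem koszulMap_apply (b : F →L[𝕜] F →L[𝕜] F →L[𝕜] 𝕜) (y u v : F) :
    koszulMap 𝕜 F b y u v =
      2⁻¹ * (b y u v + b u y v + b y v u + b v y u - b u v y - b v u y) := by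
  simp only [koszulMap, smul_apply, mul_apply_eq_comp, add_apply, sub_apply, one_apply_eq_self,
    ContinuousLinearEquiv.coe_coe, LinearIsometryEquiv.coe_toContinuousLinearEquiv,
    ContinuousLinearMap.coe_flipₗᵢ, ContinuousLinearMap.compL_apply, ContinuousLinearMap.comp_add,
    ContinuousLinearMap.flip_add, ContinuousLinearMap.comp_apply, ContinuousLinearMap.flip_apply,
    smul_eq_mul]
  ring

theorem isSymm_toBilinForm_koszulMap (b : F →L[𝕜] F →L[𝕜] F →L[𝕜] 𝕜) (y : F) :
    (koszulMap 𝕜 F b y).toBilinForm.IsSymm := by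
  constructor
  intro u v
  simp only [ContinuousLinearMap.toBilinForm_apply, koszulMap_apply]
  ring

theorem koszulMap_self [NeZero (2 : 𝕜)] (b : F →L[𝕜] F →L[𝕜] F →L[𝕜] 𝕜) (y : F) :
    koszulMap 𝕜 F b y y = b y y := by
  ext v
  rw [koszulMap_apply]
  field_simp [two_ne_zero]
  ring

theorem exists_analyticAt_isSymm_eventually_eq_add_apply_sub [CompleteSpace 𝕜] [NeZero (2 : 𝕜)]
    {f : F → F →L[𝕜] 𝕜} {z₀ : F} (hf : AnalyticAt 𝕜 f z₀)
    (hsymm : (fderiv 𝕜 f z₀).toBilinForm.IsSymm) :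
    ∃ g : F → F →L[𝕜] F →L[𝕜] 𝕜, AnalyticAt 𝕜 g z₀ ∧ g z₀ = fderiv 𝕜 f z₀ ∧
      (∀ z, (g z).toBilinForm.IsSymm) ∧ ∀ᶠ z in 𝓝 z₀, f z = f z₀ + g z (z - z₀) := by
  obtain ⟨A, hA, hA₀, hfA⟩ := exists_analyticAt_eventually_eq_add_apply_sub hf
  obtain ⟨C, hC, -, hAC⟩ := exists_analyticAt_eventually_eq_add_apply_sub hA
  refine ⟨fun z ↦ fderiv 𝕜 f z₀ + koszulMap 𝕜 F (C z) (z - z₀), ?_, ?_, ?_, ?_⟩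
  · exact analyticAt_const.add
      (((koszulMap 𝕜 F).analyticAt_bilinear _).comp₂ hC (analyticAt_id.sub analyticAt_const))
  · simp
  · intro z
    exact hsymm.add (isSymm_toBilinForm_koszulMap _ _)
  · filter_upwards [hfA, hAC] with z hz hAz
    rw [hz, hAz, hA₀, add_apply, add_apply, koszulMap_self]

end Koszul

theorem isOpen_setOf_isCoercive {V : Type*} [SeminormedAddCommGroup V] [NormedSpace ℝ V] :
    IsOpen {B : V →L[ℝ] V →L[ℝ] ℝ | IsCoercive B} := by
  rw [Metric.isOpen_iff]
  rintro B ⟨c, hc, hB⟩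
  refine ⟨c / 2, half_pos hc, fun B' hB' ↦ ⟨c / 2, half_pos hc, fun u ↦ ?_⟩⟩
  have hdist : ‖B - B'‖ ≤ c / 2 := by
    rw [← dist_eq_norm, dist_comm]
    exact (Metric.mem_ball.mp hB').le
  have hdiff : B u u - B' u u ≤ c / 2 * ‖u‖ * ‖u‖ :=
    (Real.le_norm_self _).trans ((B - B').le_of_opNorm₂_le_of_le hdist le_rfl le_rfl)
  linarith [hB u]

theorem isCoercive_iff_posDef_toQuadraticMap {V : Type*} [NormedAddCommGroup V] [NormedSpace ℝ V]
    [FiniteDimensional ℝ V] {B : V →L[ℝ] V →L[ℝ] ℝ} :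
    IsCoercive B ↔ B.toBilinForm.toQuadraticMap.PosDef := by
  refine ⟨fun ⟨c, hc, hB⟩ u hu ↦ ?_, fun hB ↦ ?_⟩
  · have : 0 < ‖u‖ := norm_pos_iff.mpr hu
    exact lt_of_lt_of_le (by positivity) (hB u)
  have hcont : Continuous fun u ↦ B u u := by fun_prop
  obtain ⟨c, hc, hcB⟩ := (isCompact_sphere (0 : V) 1).exists_forall_le' hcont.continuousOn
    fun u hu ↦ hB u (ne_zero_of_mem_unit_sphere ⟨u, hu⟩)
  refine ⟨c, hc, fun u ↦ ?_⟩
  rcases eq_or_ne u 0 with rfl | hu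
  · simp
  have hunit : c ≤ B (‖u‖⁻¹ • u) (‖u‖⁻¹ • u) := hcB _ (by simp [norm_smul, hu])
  have : 0 < ‖u‖ := norm_pos_iff.mpr hu
  calc c * ‖u‖ * ‖u‖ ≤ B (‖u‖⁻¹ • u) (‖u‖⁻¹ • u) * ‖u‖ * ‖u‖ := by gcongr
    _ = B u u := by simp only [map_smul, smul_apply, smul_eq_mul]; field_simp

theorem isCoercive_iff_posDef_toMatrix' {ι : Type*} [Fintype ι] [DecidableEq ι]
    {B : (ι → ℝ) →L[ℝ] (ι → ℝ) →L[ℝ] ℝ} (hB : B.toBilinForm.IsSymm) :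
    IsCoercive B ↔ B.toBilinForm.toMatrix'.PosDef := by
  rw [isCoercive_iff_posDef_toQuadraticMap,
    LinearMap.BilinForm.posDef_toQuadraticMap_iff_matrix (Pi.basisFun ℝ ι) _ hB,
    LinearMap.BilinForm.toMatrix_basisFun]

theorem exists_analyticAt_eventuallyEq_comp {𝕜 E F G : Type*} [RCLike 𝕜]
    [NormedAddCommGroup E] [NormedSpace 𝕜 E] [CompleteSpace E]
    [NormedAddCommGroup F] [NormedSpace 𝕜 F] [NormedAddCommGroup G] [NormedSpace 𝕜 G]
    {X : E → G} {Y : E → F} {x₀ : E} (hX : AnalyticAt 𝕜 X x₀) (hY : AnalyticAt 𝕜 Y x₀)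
    (hDY : (fderiv 𝕜 Y x₀).IsInvertible) :
    ∃ Φ : F → G, AnalyticAt 𝕜 Φ (Y x₀) ∧ X =ᶠ[𝓝 x₀] Φ ∘ Y := by
  obtain ⟨e, he⟩ := hDY
  have hYe : HasStrictFDerivAt Y (e : E →L[𝕜] F) x₀ := he ▸ hY.hasStrictFDerivAt
  have : CompleteSpace F := (completeSpace_congr (e := e.toEquiv) e.isUniformEmbedding).mp ‹_›
  have hinv : AnalyticAt 𝕜 (hYe.localInverse Y e x₀) (Y x₀) :=
    (ContDiffAt.to_localInverse (n := ω) hY.contDiffAt hYe.hasFDerivAt (by simp)).analyticAt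
  refine ⟨X ∘ hYe.localInverse Y e x₀, ?_, ?_⟩
  · exact AnalyticAt.comp (hYe.localInverse_apply_image.symm ▸ hX) hinv
  · filter_upwards [hYe.eventually_left_inverse] with x hx
    simp [hx]

theorem local_metric_critical_general {E F : Type*} [NormedAddCommGroup E] [NormedSpace ℝ E]
    [CompleteSpace E] [NormedAddCommGroup F] [NormedSpace ℝ F]
    {X : E → F →L[ℝ] ℝ} {Y : E → F} {x₀ : E} (hX : AnalyticAt ℝ X x₀) (hY : AnalyticAt ℝ Y x₀)
    (hX₀ : X x₀ = 0) (hY₀ : Y x₀ = 0) (hDY : (fderiv ℝ Y x₀).IsInvertible)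
    {g₀ : F →L[ℝ] F →L[ℝ] ℝ} (hsymm : g₀.toBilinForm.IsSymm) (hcoer : IsCoercive g₀)
    (hDX : fderiv ℝ X x₀ = g₀ ∘L fderiv ℝ Y x₀) :
    ∃ g : E → F →L[ℝ] F →L[ℝ] ℝ, ∀ᶠ x in 𝓝 x₀,
      AnalyticAt ℝ g x ∧ (g x).toBilinForm.IsSymm ∧ IsCoercive (g x) ∧ X x = g x (Y x) := by
  obtain ⟨Φ, hΦ, hXΦ⟩ := exists_analyticAt_eventuallyEq_comp hX hY hDY
  have hDΦ : fderiv ℝ Φ (Y x₀) = g₀ := by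
    obtain ⟨e, he⟩ := hDY
    have h : fderiv ℝ Φ (Y x₀) ∘L fderiv ℝ Y x₀ = g₀ ∘L fderiv ℝ Y x₀ := by
      rw [← fderiv_comp x₀ hΦ.differentiableAt hY.differentiableAt, ← hXΦ.fderiv_eq, hDX]
    rw [← he] at h
    ext1 v
    simpa using congr($h (e.symm v))
  obtain ⟨g, hg, hg₀, hgsymm, hΦg⟩ :=
    exists_analyticAt_isSymm_eventually_eq_add_apply_sub hΦ (hDΦ.symm ▸ hsymm)
  have hgY : AnalyticAt ℝ (fun x ↦ g (Y x)) x₀ := hg.comp hY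
  have hcoer' : ∀ᶠ x in 𝓝 x₀, IsCoercive (g (Y x)) :=
    hgY.continuousAt.eventually_mem (isOpen_setOf_isCoercive.mem_nhds (by simpa [hg₀, hDΦ]))
  have hΦ₀ : Φ (Y x₀) = 0 := hXΦ.eq_of_nhds.symm.trans hX₀
  refine ⟨fun x ↦ g (Y x), ?_⟩
  filter_upwards [hgY.eventually_analyticAt, hcoer', hXΦ, hY.continuousAt.eventually hΦg]
    with x hgx hcx hXx hΦx
  refine ⟨hgx, hgsymm _, hcx, ?_⟩
  rw [hXx, Function.comp_apply, hΦx, hΦ₀, hY₀, sub_zero, zero_add]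

section Matrix

open Matrix

variable {ι : Type*} [Fintype ι]

theorem apply_eq_toMatrix'_mulVec_dotProduct [DecidableEq ι] {R : Type*} [CommSemiring R]
    {B : LinearMap.BilinForm R (ι → R)} (hB : B.IsSymm) (y w : ι → R) :
    B y w = (B.toMatrix' *ᵥ y) ⬝ᵥ w := by
  rw [← hB.eq, dotProduct_comm, ← toBilin'_apply', toBilin'_toMatrix']

theorem exists_isSymm_isCoercive_toMatrix'_eq [DecidableEq ι] {M : Matrix ι ι ℝ}
    (hM : M.PosDef) :
    ∃ B : (ι → ℝ) →L[ℝ] (ι → ℝ) →L[ℝ] ℝ,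
      B.toBilinForm.IsSymm ∧ IsCoercive B ∧ B.toBilinForm.toMatrix' = M := by
  have hB : (toBilin' M).toContinuousBilinearMap.toBilinForm = toBilin' M := rfl
  have hsymm : (toBilin' M).IsSymm :=
    isSymm_toBilin'_iff_isSymm.mpr (isHermitian_iff_isSymm.mp hM.isHermitian)
  refine ⟨(toBilin' M).toContinuousBilinearMap, hsymm, ?_, ?_⟩
  · rwa [isCoercive_iff_posDef_toMatrix' (hB ▸ hsymm), hB, LinearMap.BilinForm.toMatrix'_toBilin']
  · rw [hB, LinearMap.BilinForm.toMatrix'_toBilin']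

theorem exists_posDef_eventually_eq_mulVec {E : Type*} [NormedAddCommGroup E] [NormedSpace ℝ E]
    [CompleteSpace E] {X Y : E → ι → ℝ} {x₀ : E} (hX : AnalyticAt ℝ X x₀)
    (hY : AnalyticAt ℝ Y x₀) (hX₀ : X x₀ = 0) (hY₀ : Y x₀ = 0)
    (hDY : (fderiv ℝ Y x₀).IsInvertible) {G₀ : Matrix ι ι ℝ} (hG₀ : G₀.PosDef)
    (hDX : ∀ v, fderiv ℝ X x₀ v = G₀ *ᵥ fderiv ℝ Y x₀ v) :
    ∃ G : E → Matrix ι ι ℝ, ∀ᶠ x in 𝓝 x₀,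
      (∀ i j, AnalyticAt ℝ (fun x ↦ G x i j) x) ∧ (G x).PosDef ∧ X x = G x *ᵥ Y x := by
  classical
  obtain ⟨g₀, hsymm, hcoer, rfl⟩ := exists_isSymm_isCoercive_toMatrix'_eq hG₀
  let φ : (ι → ℝ) →L[ℝ] (ι → ℝ) →L[ℝ] ℝ := (dotProductBilin ℝ ℝ).toContinuousBilinearMap
  have hφ (v w : ι → ℝ) : φ v w = v ⬝ᵥ w := rfl
  have hDφX : fderiv ℝ (φ ∘ X) x₀ = g₀ ∘L fderiv ℝ Y x₀ := by
    ext v w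
    have h := φ.hasFDerivAt.comp x₀ hX.differentiableAt.hasFDerivAt
    rw [h.fderiv]
    simp [hφ, hDX, ← apply_eq_toMatrix'_mulVec_dotProduct hsymm]
  obtain ⟨g, hg⟩ := local_metric_critical_general ((φ.analyticAt _).comp hX) hY (by simp [hX₀]) hY₀
    hDY hsymm hcoer hDφX
  refine ⟨fun x ↦ (g x).toBilinForm.toMatrix', hg.mono ?_⟩
  rintro x ⟨hgx, hsx, hcx, hXx⟩
  refine ⟨fun i j ↦ ?_, (isCoercive_iff_posDef_toMatrix' hsx).mp hcx, ?_⟩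
  · exact ((ContinuousLinearMap.apply ℝ ℝ (Pi.single j 1) ∘L
      ContinuousLinearMap.apply ℝ ((ι → ℝ) →L[ℝ] ℝ) (Pi.single i 1)).analyticAt _).comp hgx
  · refine dotProduct_eq _ _ fun w ↦ ?_
    rw [← apply_eq_toMatrix'_mulVec_dotProduct hsx]
    exact congr($hXx w)

end Matrix

/-- **Local existence of a metric around a critical point.**
Let `n ≥ 1`, `Ω ⊆ ℝⁿ` open, `X Y : Ω → ℝⁿ` real analytic on `Ω`, and `x₀ ∈ Ω` with
`X x₀ = 0`, `Y x₀ = 0`, the Fréchet derivative `DY x₀` invertible, and suppose there is a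
symmetric positive definite matrix `Ḡ` with `DX x₀ v = Ḡ · (DY x₀ v)` for all `v`.
Then there is an open neighbourhood `U ⊆ Ω` of `x₀` and a smooth map
`G : U → Matrix (Fin n) (Fin n) ℝ` with `G x` symmetric positive definite and
`X x = G x * Y x` for all `x ∈ U`. -/
theorem local_metric_critical
    (n : ℕ) (hn : 1 ≤ n) (Ω : Set (Fin n → ℝ)) (hΩ : IsOpen Ω)
    (X Y : (Fin n → ℝ) → (Fin n → ℝ))
    (hX : AnalyticOnNhd ℝ X Ω) (hY : AnalyticOnNhd ℝ Y Ω)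
    (x₀ : Fin n → ℝ) (hx₀ : x₀ ∈ Ω)
    (hX0 : X x₀ = 0) (hY0 : Y x₀ = 0)
    (hDY : Function.Bijective (fderiv ℝ Y x₀))
    (Gbar : Matrix (Fin n) (Fin n) ℝ) (hGbar : Gbar.PosDef)
    (hcomp : ∀ v : Fin n → ℝ, fderiv ℝ X x₀ v = Gbar.mulVec (fderiv ℝ Y x₀ v)) :
    ∃ U : Set (Fin n → ℝ), U ⊆ Ω ∧ IsOpen U ∧ x₀ ∈ U ∧
      ∃ G : (Fin n → ℝ) → Matrix (Fin n) (Fin n) ℝ,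
        (∀ i j, ContDiffOn ℝ (⊤ : ℕ∞) (fun x => G x i j) U) ∧
        (∀ x ∈ U, (G x).PosDef) ∧
        (∀ x ∈ U, X x = (G x).mulVec (Y x)) := by
  have hDY' : (fderiv ℝ Y x₀).IsInvertible :=
    ⟨(LinearEquiv.ofBijective (fderiv ℝ Y x₀ : _ →ₗ[ℝ] _) hDY).toContinuousLinearEquiv, rfl⟩
  obtain ⟨G, hG⟩ := exists_posDef_eventually_eq_mulVec (hX x₀ hx₀) (hY x₀ hx₀) hX0 hY0 hDY' hGbar
    hcomp
  obtain ⟨U, hU, hUo, hxU⟩ := eventually_nhds_iff.mp ((hΩ.eventually_mem hx₀).and hG)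
  exact ⟨U, fun x hx ↦ (hU x hx).1, hUo, hxU, G,
    fun i j x hx ↦ ((hU x hx).2.1 i j).contDiffAt.contDiffWithinAt,
    fun x hx ↦ (hU x hx).2.2.1, fun x hx ↦ (hU x hx).2.2.2⟩
end

section
/- Let n ≥ 1. Let U ∈ Matrix (Fin n) (Fin n) ℝ be invertible with inverse U'. Let R : Fin n → Fin n → Fin n → ℝ (write R a (c,d) with one upper index a and two lower indices c,d) satisfy the symmetry R a c d = R a d c for all a, c, d. Define T : Fin n → Fin n → Fin n → ℝ (two upper indices a,b and one lower index c) by T a b c := (1/2)·( Σ_d U' b d · R a c d + Σ_d U' a d · R b c d − Σ_{c'} Σ_{a'} Σ_{b'} U c c' · U' a a' · U' b b' · R c' a' b' ). Then T a b c = T b a c for all a, b, c, and for all a, c, d: Σ_b U d b · T a b c + Σ_b U c b · T a b d = R a c d. -/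
/-!
Lowering the upper index `b` of `T a b c` to `d` with `U` turns the three terms of `T` into
`R a c d`, `V a c d` and `V a d c`, where `V a c d = ∑ e, U' a e * (∑ b, U d b * R b c e)`; thus
the lowered tensor is `(R a c d + V a c d - V a d c) / 2`. As in the Koszul formula for the
Levi-Civita connection, the last two terms are antisymmetric in `c, d` and cancel upon
symmetrization.
-/

open Matrix

section

variable {ι κ μ ν K : Type*} [Fintype ι] [CommSemiring K]

/-- The tensor with three lower indices `c, d, e` obtained from `R` by lowering its upper index
with `U`, encoded as a family of matrices in the last two indices. -/
def lowerUpperIndex (U : Matrix κ ι K) (R : ι → Matrix κ κ K) (c : κ) : Matrix κ κ K :=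
  ∑ i, U c i • R i

theorem isSymm_lowerUpperIndex (U : Matrix κ ι K) {R : ι → Matrix κ κ K}
    (hR : ∀ a, (R a).IsSymm) (c : κ) : (lowerUpperIndex U R c).IsSymm := by
  simp only [IsSymm, lowerUpperIndex, transpose_sum, transpose_smul, (hR _).eq]

variable [Fintype κ]

theorem lowerUpperIndex_mul_apply (U : Matrix κ ι K) (R : ι → Matrix κ κ K)
    (N : Matrix κ μ K) (c d : κ) (j : μ) :
    (lowerUpperIndex U R d * N) c j = ∑ b, U d b * (R b * N) c j := by
  simp only [lowerUpperIndex, Matrix.sum_mul, Matrix.sum_apply, smul_mul, Matrix.smul_apply,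
    smul_eq_mul]

theorem mul_lowerUpperIndex_mul_transpose_apply (U : Matrix κ ι K) (R : ι → Matrix κ κ K)
    (A : Matrix μ κ K) (B : Matrix ν κ K) (i : μ) (j : ν) (c : κ) :
    (A * lowerUpperIndex U R c * Bᵀ) i j =
      ∑ c', ∑ a', ∑ b', U c c' * A i a' * B j b' * R c' a' b' := by
  simp only [lowerUpperIndex, Matrix.mul_sum, Matrix.sum_mul, Matrix.sum_apply]
  refine Finset.sum_congr rfl fun c' _ => ?_
  simp only [mul_apply, Matrix.smul_apply, smul_eq_mul, transpose_apply, Finset.sum_mul]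
  rw [Finset.sum_comm]
  refine Finset.sum_congr rfl fun a' _ => Finset.sum_congr rfl fun b' _ => ?_
  ring

theorem sum_mul_mul_transpose_apply [DecidableEq κ] {U : Matrix κ ι K} {U' : Matrix ι κ K}
    (hU : U * U' = 1) (A : Matrix μ κ K) (i : μ) (d : κ) :
    ∑ b, U d b * (A * U'ᵀ) i b = A i d := by
  calc ∑ b, U d b * (A * U'ᵀ) i b = (A * U'ᵀ * Uᵀ) i d := by
        simp only [mul_apply (M := A * U'ᵀ), transpose_apply, mul_comm]
    _ = A i d := by rw [Matrix.mul_assoc, ← transpose_mul, hU, transpose_one, Matrix.mul_one]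

end

section

variable {ι κ K : Type*} [Fintype ι] [Fintype κ] [CommRing K] [Invertible (2 : K)]

/-- The tensor `T a b c` solving the order-2 tensor equation. Upper indices range over `ι` and
lower indices over `κ`; `R a` is the matrix of the two lower indices of `R`. -/
def orderTwoSolution (U : Matrix κ ι K) (U' : Matrix ι κ K)
    (R : ι → Matrix κ κ K) (a b : ι) (c : κ) : K :=
  ⅟2 * ((∑ d, U' b d * R a c d) + (∑ d, U' a d * R b c d)
    - ∑ c', ∑ a', ∑ b', U c c' * U' a a' * U' b b' * R c' a' b')

theorem orderTwoSolution_eq (U : Matrix κ ι K) (U' : Matrix ι κ K)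
    (R : ι → Matrix κ κ K) (a b : ι) (c : κ) :
    orderTwoSolution U U' R a b c =
      ⅟2 * ((R a * U'ᵀ) c b + (R b * U'ᵀ) c a - (U' * lowerUpperIndex U R c * U'ᵀ) a b) := by
  rw [mul_lowerUpperIndex_mul_transpose_apply]
  simp only [orderTwoSolution, mul_apply, transpose_apply, mul_comm (U' _ _) (R _ _ _)]

theorem orderTwoSolution_comm (U : Matrix κ ι K) (U' : Matrix ι κ K)
    {R : ι → Matrix κ κ K} (hR : ∀ a, (R a).IsSymm) (a b : ι) (c : κ) :
    orderTwoSolution U U' R a b c = orderTwoSolution U U' R b a c := by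
  have hconj : (U' * lowerUpperIndex U R c * U'ᵀ).IsSymm := by
    simp only [IsSymm, transpose_mul, transpose_transpose, (isSymm_lowerUpperIndex U hR c).eq,
      Matrix.mul_assoc]
  rw [orderTwoSolution_eq, orderTwoSolution_eq, hconj.apply a b, add_comm ((R a * U'ᵀ) c b)]

theorem sum_mul_orderTwoSolution [DecidableEq κ] {U : Matrix κ ι K}
    {U' : Matrix ι κ K} (hU : U * U' = 1) {R : ι → Matrix κ κ K} (hR : ∀ a, (R a).IsSymm)
    (a : ι) (c d : κ) :
    ∑ b, U d b * orderTwoSolution U U' R a b c =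
      ⅟2 * (R a c d + (lowerUpperIndex U R d * U'ᵀ) c a
        - (lowerUpperIndex U R c * U'ᵀ) d a) := by
  have hflip : (U' * lowerUpperIndex U R c) a d = (lowerUpperIndex U R c * U'ᵀ) d a := by
    rw [← transpose_apply (U' * _), transpose_mul, (isSymm_lowerUpperIndex U hR c).eq]
  simp only [orderTwoSolution_eq, mul_left_comm _ (⅟2 : K), ← Finset.mul_sum, mul_sub, mul_add,
    Finset.sum_sub_distrib, Finset.sum_add_distrib, sum_mul_mul_transpose_apply hU,
    ← lowerUpperIndex_mul_apply, hflip]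

theorem tensor_equation_order2_general [DecidableEq κ] (U : Matrix κ ι K)
    (U' : Matrix ι κ K) (hU : U * U' = 1) (R : ι → Matrix κ κ K) (hR : ∀ a, (R a).IsSymm) :
    (∀ a b c, orderTwoSolution U U' R a b c = orderTwoSolution U U' R b a c) ∧
    (∀ a c d, (∑ b, U d b * orderTwoSolution U U' R a b c) +
      (∑ b, U c b * orderTwoSolution U U' R a b d) = R a c d) := by
  refine ⟨orderTwoSolution_comm U U' hR, fun a c d => ?_⟩
  rw [sum_mul_orderTwoSolution hU hR, sum_mul_orderTwoSolution hU hR, (hR a).apply c d]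
  linear_combination R a c d * invOf_mul_self (2 : K)

end

/-- **Explicit solution of the order-2 tensor equation.**
Let `U` be invertible with inverse `U'`, and let `R` (one upper index, two lower indices)
be symmetric in its lower indices. Then the tensor
`T a b c := (1/2)·(Σ_d U' b d · R a c d + Σ_d U' a d · R b c d
  − Σ_{c',a',b'} U c c' · U' a a' · U' b b' · R c' a' b')`
satisfies `T a b c = T b a c` and `Σ_b U d b · T a b c + Σ_b U c b · T a b d = R a c d`. -/
theorem tensor_equation_order2
    (n : ℕ) (hn : 1 ≤ n) (U U' : Matrix (Fin n) (Fin n) ℝ)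
    (hUU' : U * U' = 1) (hU'U : U' * U = 1)
    (R : Fin n → Fin n → Fin n → ℝ)
    (hR : ∀ a c d, R a c d = R a d c) :
    (∀ a b c,
      (1 / 2 : ℝ) * ((∑ d, U' b d * R a c d) + (∑ d, U' a d * R b c d)
        - ∑ c', ∑ a', ∑ b', U c c' * U' a a' * U' b b' * R c' a' b')
      = (1 / 2 : ℝ) * ((∑ d, U' a d * R b c d) + (∑ d, U' b d * R a c d)
        - ∑ c', ∑ a', ∑ b', U c c' * U' b a' * U' a b' * R c' a' b')) ∧
    (∀ a c d,
      (∑ b, U d b *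
        ((1 / 2 : ℝ) * ((∑ e, U' b e * R a c e) + (∑ e, U' a e * R b c e)
          - ∑ c', ∑ a', ∑ b', U c c' * U' a a' * U' b b' * R c' a' b'))) +
      (∑ b, U c b *
        ((1 / 2 : ℝ) * ((∑ e, U' b e * R a d e) + (∑ e, U' a e * R b d e)
          - ∑ c', ∑ a', ∑ b', U d c' * U' a a' * U' b b' * R c' a' b')))
      = R a c d) := by
  simpa only [orderTwoSolution, invOf_eq_inv, one_div] using
    tensor_equation_order2_general U U' hUU' R fun a => IsSymm.ext fun c d => hR a d c
end

section
/- Let n ≥ 1 and N ≥ 2. Let U ∈ Matrix (Fin n) (Fin n) ℝ be invertible. Let R : Fin n → (Fin N → Fin n) → ℝ (one upper index and N lower indices) be symmetric in its lower indices, i.e. R a (γ ∘ π) = R a γ for every permutation π of Fin N and every γ : Fin N → Fin n. Then there exists T : Fin n → Fin n → (Fin (N−1) → Fin n) → ℝ (two upper indices, N−1 lower indices) such that T a b δ = T b a δ for all a, b, δ, T is symmetric in its lower indices, and for every γ : Fin N → Fin n and every a: Σ_{i ∈ Fin N} Σ_{b ∈ Fin n} U (γ i) b · T a b (γ with the i-th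 entry removed) = R a γ. -/
/-- `removeEntry γ i` is the function `Fin (N-1) → Fin n` obtained from `γ : Fin N → Fin n`
by deleting the `i`-th value. -/
def removeEntry {N n : ℕ} (hN : 0 < N) (γ : Fin N → Fin n) (i : Fin N) :
    Fin (N - 1) → Fin n :=
  fun j => γ (Fin.cast (Nat.succ_pred_eq_of_pos hN)
    ((Fin.cast (Nat.succ_pred_eq_of_pos hN).symm i).succAbove j))

/-!
Write `N = k + 2` and let `V` be a right inverse of `U`. Raising an index of `R a` with `V` and
symmetrising over the two upper indices gives a first guess. Contracted with `U` and summed over the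
removed entry, its two halves give `N * R a γ` and an error term `∑ i, H (γ i) (γ without entry i)`,
where `H c δ = ∑ d, V a d * ∑ b, U c b * R b (d, δ)`. The correction
`-1 / (N - 1) * ∑ j, ∑ e, V b e * H (δ j) (e, δ without entry j)` is again symmetric in `a` and `b`,
and it cancels the error: the two removed entries can be removed in either order, and once the entry
that becomes `c` is fixed, all `N - 1` choices of the other one contribute the same value `H c`.
-/

open Equiv Matrix

section Tuples

variable {α β E : Type*} {m : ℕ}

/-- Symmetry of a tensor in its `m` lower indices: `f` is unchanged when the entries of its argument
are permuted. -/
def IsPermInvariant (f : (Fin m → α) → β) : Prop :=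
  ∀ (γ : Fin m → α) (π : Perm (Fin m)), f (γ ∘ π) = f γ

theorem exists_perm_removeNth_comp (π : Perm (Fin (m + 1))) (i : Fin (m + 1)) :
    ∃ σ : Perm (Fin m), ∀ γ : Fin (m + 1) → α,
      i.removeNth (γ ∘ π) = (π i).removeNth γ ∘ σ := by
  let restricted : {j // j ≠ i} ≃ {j // j ≠ π i} :=
    π.subtypeEquiv fun _ => π.injective.ne_iff.symm
  let σ : Perm (Fin m) :=
    (finSuccAboveEquiv i).trans (restricted.trans (finSuccAboveEquiv (π i)).symm)
  have succAbove_σ (j : Fin m) : (π i).succAbove (σ j) = π (i.succAbove j) :=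
    congrArg Subtype.val
      ((finSuccAboveEquiv (π i)).apply_symm_apply (restricted (finSuccAboveEquiv i j)))
  exact ⟨σ, fun γ => funext fun j => congrArg γ (succAbove_σ j).symm⟩

namespace IsPermInvariant

theorem cons_removeNth {f : (Fin (m + 1) → α) → β} (hf : IsPermInvariant f)
    (γ : Fin (m + 1) → α) (i : Fin (m + 1)) : f (Fin.cons (γ i) (i.removeNth γ)) = f γ := by
  rw [Fin.cons_removeNth_eq_comp_cycleRange_symm, hf]

theorem cons_cons_comm {f : (Fin (m + 2) → α) → β} (hf : IsPermInvariant f) (a b : α)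
    (δ : Fin m → α) : f (Fin.cons a (Fin.cons b δ)) = f (Fin.cons b (Fin.cons a δ)) := by
  have removeNth_one : Fin.removeNth 1 (Fin.cons b (Fin.cons a δ) : Fin (m + 2) → α) =
      (Fin.cons b δ : Fin (m + 1) → α) := by
    ext j
    cases j using Fin.cases <;> simp [Fin.removeNth]
  rw [← removeNth_one]
  exact hf.cons_removeNth (Fin.cons b (Fin.cons a δ)) 1

theorem comp_cons {f : (Fin (m + 1) → α) → β} (hf : IsPermInvariant f) (a : α) :
    IsPermInvariant fun δ => f (Fin.cons a δ) := by
  intro δ π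
  have cons_comp : (Fin.cons a (δ ∘ π) : Fin (m + 1) → α) =
      (Fin.cons a δ : Fin (m + 1) → α) ∘ Perm.decomposeFin.symm (0, π) := by
    ext j
    cases j using Fin.cases <;> simp
  simp only [cons_comp, hf _ _]

end IsPermInvariant

/-- The sum over the entries of `γ` of `S` evaluated at that entry and the remaining tuple. It is
the left-hand side of the tensor equation once the index `b` has been contracted with `U`. -/
def removeNthSum [AddCommMonoid E] (S : α → (Fin m → α) → E) (γ : Fin (m + 1) → α) : E :=
  ∑ i, S (γ i) (i.removeNth γ)

theorem isPermInvariant_removeNthSum [AddCommMonoid E] {S : α → (Fin m → α) → E}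
    (hS : ∀ c, IsPermInvariant (S c)) : IsPermInvariant (removeNthSum S) := by
  intro γ π
  refine Fintype.sum_equiv π _ _ fun i => ?_
  obtain ⟨σ, hσ⟩ := exists_perm_removeNth_comp (α := α) π i
  rw [hσ, hS, Function.comp_apply]

theorem removeNthSum_cons [AddCommMonoid E] {f : (Fin (m + 1) → α) → E}
    (hf : IsPermInvariant f) :
    removeNthSum (fun b δ => f (Fin.cons b δ)) = (m + 1) • f := by
  ext γ
  simp only [removeNthSum, Pi.smul_apply, hf.cons_removeNth, Finset.sum_const, Finset.card_univ,
    Fintype.card_fin]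

theorem removeNthSum_comm [AddCommMonoid E] (G : α → α → (Fin m → α) → E)
    (γ : Fin (m + 2) → α) :
    removeNthSum (fun b => removeNthSum fun c => G b c) γ =
      removeNthSum (fun c => removeNthSum fun b => G b c) γ := by
  -- `(i, j) ↦ (i.succAbove j, j.predAbove i)` exchanges the order in which two entries are removed.
  let swapOrder (p : Fin (m + 2) × Fin (m + 1)) : Fin (m + 2) × Fin (m + 1) :=
    (p.1.succAbove p.2, p.2.predAbove p.1)
  have swapOrder_involutive : Function.Involutive swapOrder := fun p =>
    Prod.ext (Fin.succAbove_succAbove_predAbove p.1 p.2) (Fin.predAbove_predAbove_succAbove p.1 p.2)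
  simp only [removeNthSum, ← Fintype.sum_prod_type']
  refine Fintype.sum_equiv swapOrder_involutive.toPerm _ _ fun p => ?_
  simp only [Function.Involutive.coe_toPerm, swapOrder, Fin.removeNth_apply,
    Fin.succAbove_succAbove_predAbove, ← Fin.removeNth_removeNth_eq_swap]

theorem removeNthSum_sub_removeNthSum_cons [AddCommGroup E] {f : (Fin (m + 2) → α) → E}
    {H : α → (Fin (m + 1) → α) → E} (hf : IsPermInvariant f) (hH : ∀ c, IsPermInvariant (H c))
    (γ : Fin (m + 2) → α) :
    removeNthSum (fun b δ => (m + 1) • (f (Fin.cons b δ) + H b δ) -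
        removeNthSum (fun c ε => H c (Fin.cons b ε)) δ) γ =
      ((m + 1) * (m + 2)) • f γ := by
  have raised_sum : removeNthSum (fun b => removeNthSum fun c ε => H c (Fin.cons b ε)) γ =
      (m + 1) • removeNthSum H γ := by
    rw [removeNthSum_comm fun b c ε => H c (Fin.cons b ε)]
    simp only [removeNthSum_cons (hH _)]
    simp only [removeNthSum, Pi.smul_apply, Finset.smul_sum]
  calc _ = (m + 1) • (removeNthSum (fun b δ => f (Fin.cons b δ)) γ + removeNthSum H γ) -
        removeNthSum (fun b => removeNthSum fun c ε => H c (Fin.cons b ε)) γ := by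
        simp only [removeNthSum, Finset.sum_sub_distrib, Finset.sum_add_distrib, Finset.smul_sum,
          smul_add]
    _ = ((m + 1) * (m + 2)) • f γ := by
        rw [raised_sum, removeNthSum_cons hf, Pi.smul_apply, smul_add, add_sub_cancel_right,
          mul_smul]

end Tuples

section TensorEquation

variable {ι κ K : Type*} [Fintype ι] [CommRing K] {k : ℕ}

theorem mulVec_removeNthSum (V : Matrix κ ι K) (S : ι → ι → (Fin k → ι) → K) (b : κ)
    (δ : Fin (k + 1) → ι) :
    (V *ᵥ fun e => removeNthSum (S e) δ) b =
      removeNthSum (fun c ε => (V *ᵥ fun e => S e c ε) b) δ := by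
  simp only [removeNthSum, mulVec, dotProduct, Finset.mul_sum]
  exact Finset.sum_comm

variable [Fintype κ]

/-- The tensor obtained from `R` by lowering its upper index to `c` with `U` and raising its first
lower index to `a` with `V`. -/
def exchangeIndex (U : Matrix ι κ K) (V : Matrix κ ι K) (R : κ → (Fin (k + 1) → ι) → K)
    (a : κ) (c : ι) (δ : Fin k → ι) : K :=
  (V *ᵥ fun d => (U *ᵥ fun b => R b (Fin.cons d δ)) c) a

/-- The explicit solution of the tensor equation of order `N = k + 2` for `R`, multiplied by
`N * (N - 1)` to avoid division. -/
def scaledSolution (U : Matrix ι κ K) (V : Matrix κ ι K) (R : κ → (Fin (k + 2) → ι) → K)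
    (a b : κ) (δ : Fin (k + 1) → ι) : K :=
  (k + 1) • ((V *ᵥ fun d => R a (Fin.cons d δ)) b + (V *ᵥ fun d => R b (Fin.cons d δ)) a) -
    (V *ᵥ fun e => removeNthSum (fun c ε => exchangeIndex U V R a c (Fin.cons e ε)) δ) b

variable {U : Matrix ι κ K} {V : Matrix κ ι K}

theorem isPermInvariant_exchangeIndex {R : κ → (Fin (k + 1) → ι) → K}
    (hR : ∀ a, IsPermInvariant (R a)) (a : κ) (c : ι) :
    IsPermInvariant (exchangeIndex U V R a c) := by
  intro δ π
  simp only [exchangeIndex, ((hR _).comp_cons _) δ π]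

theorem isPermInvariant_scaledSolution {R : κ → (Fin (k + 2) → ι) → K}
    (hR : ∀ a, IsPermInvariant (R a)) (a b : κ) : IsPermInvariant (scaledSolution U V R a b) := by
  intro δ π
  have correction_invariant (e : ι) :=
    isPermInvariant_removeNthSum fun c =>
      (isPermInvariant_exchangeIndex (U := U) (V := V) hR a c).comp_cons e
  simp only [scaledSolution, ((hR _).comp_cons _) δ π, correction_invariant _ δ π]

theorem raise_exchangeIndex_comm {R : κ → (Fin (k + 2) → ι) → K}
    (hR : ∀ a, IsPermInvariant (R a)) (a b : κ) (c : ι) (ε : Fin k → ι) :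
    (V *ᵥ fun e => exchangeIndex U V R a c (Fin.cons e ε)) b =
      (V *ᵥ fun e => exchangeIndex U V R b c (Fin.cons e ε)) a := by
  simp only [exchangeIndex, mulVec, dotProduct, Finset.mul_sum]
  rw [Finset.sum_comm]
  refine Fintype.sum_congr _ _ fun d => Fintype.sum_congr _ _ fun e =>
    Fintype.sum_congr _ _ fun a' => ?_
  rw [(hR a').cons_cons_comm]
  ring

theorem scaledSolution_comm {R : κ → (Fin (k + 2) → ι) → K}
    (hR : ∀ a, IsPermInvariant (R a)) (a b : κ) (δ : Fin (k + 1) → ι) :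
    scaledSolution U V R a b δ = scaledSolution U V R b a δ := by
  simp only [scaledSolution, mulVec_removeNthSum, raise_exchangeIndex_comm hR a b]
  rw [add_comm ((V *ᵥ _) b)]

variable [DecidableEq ι]

theorem mulVec_scaledSolution (hUV : U * V = 1) (R : κ → (Fin (k + 2) → ι) → K) (a : κ) (x : ι)
    (δ : Fin (k + 1) → ι) :
    (U *ᵥ fun b => scaledSolution U V R a b δ) x =
      (k + 1) • (R a (Fin.cons x δ) + exchangeIndex U V R a x δ) -
        removeNthSum (fun c ε => exchangeIndex U V R a c (Fin.cons x ε)) δ := by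
  have lower_raise (g : ι → K) : U *ᵥ (V *ᵥ g) = g := by
    rw [mulVec_mulVec, hUV, one_mulVec]
  have lower_transposed : (U *ᵥ fun b => (V *ᵥ fun d => R b (Fin.cons d δ)) a) x =
      exchangeIndex U V R a x δ := by
    simp only [exchangeIndex, mulVec, dotProduct, Finset.mul_sum, mul_left_comm]
    exact Finset.sum_comm
  have scaledSolution_eq : (fun b => scaledSolution U V R a b δ) =
      (k + 1) • ((V *ᵥ fun d => R a (Fin.cons d δ)) +
        fun b => (V *ᵥ fun d => R b (Fin.cons d δ)) a) -
      V *ᵥ fun e => removeNthSum (fun c ε => exchangeIndex U V R a c (Fin.cons e ε)) δ := rfl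
  rw [scaledSolution_eq, mulVec_sub, mulVec_smul, mulVec_add, lower_raise, lower_raise,
    Pi.sub_apply, Pi.smul_apply, Pi.add_apply, lower_transposed]

end TensorEquation

theorem tensor_equation_orderN_general {ι κ K : Type*} [Finite ι] [Fintype κ] [DecidableEq ι]
    [CommRing K] {k : ℕ} (hk : IsUnit (((k + 1) * (k + 2) : ℕ) : K))
    {U : Matrix ι κ K} {V : Matrix κ ι K} (hUV : U * V = 1)
    (R : κ → (Fin (k + 2) → ι) → K) (hR : ∀ a, IsPermInvariant (R a)) :
    ∃ T : κ → κ → (Fin (k + 1) → ι) → K,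
      (∀ a b δ, T a b δ = T b a δ) ∧ (∀ a b, IsPermInvariant (T a b)) ∧
      ∀ a γ, ∑ i, ∑ b, U (γ i) b * T a b (i.removeNth γ) = R a γ := by
  cases nonempty_fintype ι
  obtain ⟨r, hr⟩ := hk.exists_left_inv
  refine ⟨fun a b δ => r * scaledSolution U V R a b δ,
    fun a b δ => congrArg (r * ·) (scaledSolution_comm hR a b δ),
    fun a b δ π => congrArg (r * ·) (isPermInvariant_scaledSolution hR a b δ π), fun a γ => ?_⟩
  calc ∑ i, ∑ b, U (γ i) b * (r * scaledSolution U V R a b (i.removeNth γ))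
      = r * removeNthSum (fun x δ => (U *ᵥ fun b => scaledSolution U V R a b δ) x) γ := by
        simp only [removeNthSum, mulVec, dotProduct, Finset.mul_sum, mul_left_comm]
    _ = r * (((k + 1) * (k + 2)) • R a γ) := by
        simp only [mulVec_scaledSolution hUV]
        rw [removeNthSum_sub_removeNthSum_cons (hR a) (isPermInvariant_exchangeIndex hR a)]
    _ = R a γ := by rw [nsmul_eq_mul, ← mul_assoc, hr, one_mul]

/-- **Solvability of the order-N tensor equation.**
Let `N ≥ 2`, let `U` be an invertible `n × n` matrix, and let `R` (one upper index, `N`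
lower indices) be symmetric in its lower indices. Then there is a tensor `T` (two upper
indices, `N − 1` lower indices), symmetric in its upper index pair and in its lower
indices, such that for every `γ : Fin N → Fin n` and every `a`:
`Σ_{i} Σ_{b} U (γ i) b · T a b (γ with the i-th entry removed) = R a γ`. -/
theorem tensor_equation_orderN
    (n N : ℕ) (hn : 1 ≤ n) (hN : 2 ≤ N)
    (U : Matrix (Fin n) (Fin n) ℝ) (hU : IsUnit U)
    (R : Fin n → (Fin N → Fin n) → ℝ)
    (hR : ∀ (a : Fin n) (γ : Fin N → Fin n) (π : Equiv.Perm (Fin N)), R a (γ ∘ π) = R a γ) :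
    ∃ T : Fin n → Fin n → (Fin (N - 1) → Fin n) → ℝ,
      (∀ a b δ, T a b δ = T b a δ) ∧
      (∀ (a b : Fin n) (δ : Fin (N - 1) → Fin n) (π : Equiv.Perm (Fin (N - 1))),
        T a b (δ ∘ π) = T a b δ) ∧
      (∀ (a : Fin n) (γ : Fin N → Fin n),
        ∑ i : Fin N, ∑ b : Fin n,
          U (γ i) b * T a b (removeEntry (by omega) γ i) = R a γ) := by
  obtain ⟨V, hUV⟩ := hU.exists_right_inv
  obtain ⟨k, rfl⟩ := Nat.exists_eq_add_of_le' hN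
  -- `removeEntry _ γ i` is definitionally `i.removeNth γ` once `N` is a successor.
  exact tensor_equation_orderN_general (by positivity : _ ≠ (0 : ℝ)).isUnit hUV R hR
end

section
/- Let (r_N)_{N≥0} and (t_N)_{N≥0} be sequences of nonnegative real numbers, and let C' ≥ 0, q > 0, K̃ ≥ 0 and n ≥ 1 be constants. Assume that for every N ≥ 2: r_N / N! ≤ C'·qᴺ·( 1 + n·Σ_{k=0}^{N−2} t_k/(k!·qᵏ) ) and t_{N−1} ≤ (K̃ / N)·r_N. Then there exist constants C < ∞ and p < ∞ such that t_N ≤ C·N!·pᴺ for all N ≥ 1. -/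
/-!
Put `a k = t k / (k! * q ^ k)` and `A = Kt * C' * q`. Eliminating `r` from the two estimates leaves
`a m ≤ A * (1 + n * ∑ k < m, a k)` for `m ≥ 1`, a Grönwall recursion for the scaled coefficients,
so `a` grows at most like `(1 + A * n) ^ m` and `t` at most like `m! * ((1 + A * n) * q) ^ m`.
-/

section Gronwall

variable {R : Type*} [CommSemiring R] [PartialOrder R] [IsOrderedRing R]

theorem le_mul_prod_one_add_of_le_add_sum {u K : ℕ → R} {c : R} (hK : ∀ m, 0 ≤ K m)
    (hu : ∀ m, u m ≤ c + ∑ k ∈ Finset.range m, K k * u k) (m : ℕ) :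
    u m ≤ c * ∏ k ∈ Finset.range m, (1 + K k) := by
  let v : ℕ → R := fun j => c + ∑ k ∈ Finset.range j, K k * u k
  have v_succ_le : ∀ j, v (j + 1) ≤ (1 + K j) * v j + 0 := fun j =>
    calc v (j + 1) = v j + K j * u j := by simp only [v, Finset.sum_range_succ, add_assoc]
      _ ≤ v j + K j * v j := by gcongr; exacts [hK j, hu j]
      _ = (1 + K j) * v j + 0 := by ring
  have v_le := discrete_gronwall_prod_general (fun j _ => v_succ_le j)
    (fun j _ => add_nonneg zero_le_one (hK j)) (Nat.zero_le m)
  exact (hu m).trans (by simpa [v] using v_le)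

theorem succ_le_mul_one_add_pow_of_succ_le {a : ℕ → R} {A B : R} (hA : 0 ≤ A) (hB : 0 ≤ B)
    (ha : ∀ m, a (m + 1) ≤ A * (1 + B * ∑ k ∈ Finset.range (m + 1), a k)) (m : ℕ) :
    a (m + 1) ≤ A * (1 + B * a 0) * (1 + A * B) ^ m := by
  have shifted : ∀ j, a (j + 1) ≤
      A * (1 + B * a 0) + ∑ k ∈ Finset.range j, A * B * a (k + 1) := fun j =>
    (ha j).trans_eq (by rw [Finset.sum_range_succ', ← Finset.mul_sum]; ring)
  simpa using le_mul_prod_one_add_of_le_add_sum (fun _ => mul_nonneg hA hB) shifted m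

end Gronwall

section LinearOrderedField

variable {𝕜 : Type*} [Field 𝕜] [LinearOrder 𝕜] [IsStrictOrderedRing 𝕜]

theorem div_factorial_mul_pow_le {ρ τ C q K S : 𝕜} {m : ℕ} (hq : 0 < q) (hK : 0 ≤ K)
    (hρ : ρ / ((m + 1).factorial : 𝕜) ≤ C * q ^ (m + 1) * S)
    (hτ : τ ≤ K / ((m + 1 : ℕ) : 𝕜) * ρ) :
    τ / ((m.factorial : 𝕜) * q ^ m) ≤ K * C * q * S := by
  rw [div_le_iff₀ (by positivity)] at hρ ⊢
  calc τ ≤ K / ((m + 1 : ℕ) : 𝕜) * ρ := hτ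
    _ ≤ K / ((m + 1 : ℕ) : 𝕜) * (C * q ^ (m + 1) * S * ((m + 1).factorial : 𝕜)) := by gcongr
    _ = K * C * q * S * ((m.factorial : 𝕜) * q ^ m) := by
      rw [Nat.factorial_succ, Nat.cast_mul]
      field_simp
      ring

theorem coefficient_growth_bound_general (r t : ℕ → 𝕜) {C' q Kt n : 𝕜}
    (hC' : 0 ≤ C') (hq : 0 < q) (hKt : 0 ≤ Kt) (hn : 0 ≤ n)
    (h1 : ∀ N, 2 ≤ N →
      r N / (N.factorial : 𝕜) ≤
        C' * q ^ N * (1 + n * ∑ k ∈ Finset.range (N - 1), t k / ((k.factorial : 𝕜) * q ^ k)))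
    (h2 : ∀ N, 2 ≤ N → t (N - 1) ≤ Kt / (N : 𝕜) * r N) :
    ∃ C p : 𝕜, ∀ N, 1 ≤ N → t N ≤ C * (N.factorial : 𝕜) * p ^ N := by
  let a : ℕ → 𝕜 := fun k => t k / ((k.factorial : 𝕜) * q ^ k)
  let A := Kt * C' * q
  have hA : 0 ≤ A := by positivity
  have a_succ_le : ∀ m, a (m + 1) ≤ A * (1 + n * ∑ k ∈ Finset.range (m + 1), a k) := fun m =>
    div_factorial_mul_pow_le hq hKt (h1 (m + 2) (Nat.le_add_left 2 m))
      (h2 (m + 2) (Nat.le_add_left 2 m))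
  refine ⟨A * (1 + n * a 0) / (1 + A * n), (1 + A * n) * q, fun N hN => ?_⟩
  obtain ⟨m, rfl⟩ := Nat.exists_eq_add_of_le' hN
  have growth : a (m + 1) ≤ A * (1 + n * a 0) * (1 + A * n) ^ m :=
    succ_le_mul_one_add_pow_of_succ_le hA hn a_succ_le m
  calc t (m + 1) ≤ A * (1 + n * a 0) * (1 + A * n) ^ m *
        (((m + 1).factorial : 𝕜) * q ^ (m + 1)) := (div_le_iff₀ (by positivity)).mp growth
    _ = A * (1 + n * a 0) / (1 + A * n) * ((m + 1).factorial : 𝕜) *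
        ((1 + A * n) * q) ^ (m + 1) := by
      have : 1 + A * n ≠ 0 := by positivity
      rw [mul_pow, pow_succ (1 + A * n)]
      field_simp

end LinearOrderedField

/-- **Growth bound for the power series coefficients.**
Let `(r_N)` and `(t_N)` be nonnegative sequences, `C' ≥ 0`, `q > 0`, `K̃ ≥ 0`, `n ≥ 1`,
such that for every `N ≥ 2`:
`r_N / N! ≤ C'·qᴺ·(1 + n·Σ_{k=0}^{N-2} t_k/(k!·qᵏ))` and `t_{N-1} ≤ (K̃/N)·r_N`.
Then there are constants `C, p` with `t_N ≤ C·N!·pᴺ` for all `N ≥ 1`. -/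
theorem coefficient_growth_bound
    (r t : ℕ → ℝ) (hr : ∀ N, 0 ≤ r N) (ht : ∀ N, 0 ≤ t N)
    (C' : ℝ) (hC' : 0 ≤ C') (q : ℝ) (hq : 0 < q) (Kt : ℝ) (hKt : 0 ≤ Kt)
    (n : ℕ) (hn : 1 ≤ n)
    (h1 : ∀ N, 2 ≤ N →
      r N / (N.factorial : ℝ) ≤
        C' * q ^ N *
          (1 + (n : ℝ) * ∑ k ∈ Finset.range (N - 1), t k / ((k.factorial : ℝ) * q ^ k)))
    (h2 : ∀ N, 2 ≤ N → t (N - 1) ≤ (Kt / (N : ℝ)) * r N) :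
    ∃ C p : ℝ, ∀ N, 1 ≤ N → t N ≤ C * (N.factorial : ℝ) * p ^ N :=
  coefficient_growth_bound_general r t hC' hq hKt n.cast_nonneg h1 h2
end

section
/- Let n ≥ 1, let Ω ⊆ ℝⁿ be open, and let X, Y : Ω → ℝⁿ be smooth. Assume that at every point m ∈ Ω with Y(m) = 0, the derivative DY(m) is invertible and both X and Y are real-analytic on some neighbourhood of m. Then there exists a smooth map g : Ω → Matrix (Fin n) (Fin n) ℝ with g(x) symmetric positive definite for all x ∈ Ω and Y(x) = g(x) · X(x) for all x ∈ Ω, if and only if the following three conditions hold: (i) ⟨X(m), Y(m)⟩ > 0 for every m ∈ Ω with Y(m) ≠ 0; (ii) X(m) = 0 for every m ∈ Ω with Y(m) = 0; (iii) for every m ∈ Ω with Y(m) = 0 there exists a symmetric positive definite matrix ḡ ∈ Matrix (Fin n) (Fin n) ℝ such that DY(m) v = ḡ · (DX(m) v) for all v ∈ ℝⁿ. -/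
/-!
If `Y = g X` with `g` positive definite, then pairing with `X` gives the sign condition off the
zeros of `Y`, and differentiating at a zero gives `DY = g DX` there.

Conversely, for each `x` the positive definite matrices sending `X x` to `Y x` form a convex set,
so by a partition of unity it is enough to find `g` near each point. Away from the zeros of `Y` an
explicit formula does it. At a zero `m` with `DY m = G DX m`, the remainder `Y - G X` vanishes to
second order, and `DX m` is injective; Hadamard's lemma, applied twice to the remainder and once to
`X`, writes the remainder as `B x (X x) (X x)` with `B x` symmetric bilinear and smooth in `x`.
Every such quadratic vector `B u u` equals `S u` for a *symmetric* matrix `S` depending linearly on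
`u`, so `g x = G + S (X x)` is symmetric, sends `X x` to `Y x`, and is positive definite near `m`
because `X m = 0`.
-/

open Filter Topology Matrix
open scoped ContDiff

section Hadamard

variable {E F G : Type*} [NormedAddCommGroup E] [NormedSpace ℝ E]
  [NormedAddCommGroup F] [NormedSpace ℝ F] [NormedAddCommGroup G] [NormedSpace ℝ G]

theorem exists_contDiffAt_leftInverse [CompleteSpace F] {n : WithTop ℕ∞}
    {P : E → F →L[ℝ] G} {m : E} (hP : ContDiff ℝ n P) (hm : (P m).HasLeftInverse) :
    ∃ Q : E → G →L[ℝ] F, ∀ᶠ x in 𝓝 m, ContDiffAt ℝ n Q x ∧ ∀ v, Q x (P x v) = v := by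
  obtain ⟨K, hK⟩ := hm
  have hKP : ContDiff ℝ n fun x => K ∘L P x := contDiff_const.clm_comp hP
  have hKPm : K ∘L P m = 1 := ContinuousLinearMap.ext hK
  have hunit : ∀ᶠ x in 𝓝 m, IsUnit (K ∘L P x) :=
    hKP.continuous.continuousAt.eventually
      (Units.isOpen.mem_nhds (hKPm ▸ isUnit_one : IsUnit (K ∘L P m)))
  refine ⟨fun x => Ring.inverse (K ∘L P x) ∘L K, ?_⟩
  filter_upwards [hunit] with x hx
  refine ⟨?_, fun v => DFunLike.congr_fun (Ring.inverse_mul_cancel (K ∘L P x) hx) v⟩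
  obtain ⟨u, hu⟩ := hx
  have hinverse : ContDiffAt ℝ n (Ring.inverse : (F →L[ℝ] F) → F →L[ℝ] F) (K ∘L P x) :=
    hu ▸ contDiffAt_ringInverse ℝ u
  exact (hinverse.comp x hKP.contDiffAt).clm_comp (contDiffAt_const (c := K))

theorem contDiff_fderiv_curry_left {k n : WithTop ℕ∞} {f : E → ℝ → F}
    (hf : ContDiff ℝ n (Function.uncurry f)) (hkn : k + 1 ≤ n) :
    ContDiff ℝ k fun p : E × ℝ => fderiv ℝ (f · p.2) p.1 := by
  have hswap : ContDiff ℝ n (Function.uncurry fun (p : E × ℝ) y => f y p.2) :=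
    hf.comp (by fun_prop : ContDiff ℝ n fun q : (E × ℝ) × E => (q.2, q.1.2))
  exact hswap.fderiv contDiff_fst hkn

variable [FiniteDimensional ℝ E]

theorem hasFDerivAt_intervalIntegral_of_contDiff {f : E → ℝ → F}
    (hf : ContDiff ℝ 1 (Function.uncurry f)) (a b : ℝ) (x : E) :
    HasFDerivAt (fun x => ∫ t in a..b, f x t) (∫ t in a..b, fderiv ℝ (f · t) x) x := by
  have hcont (y : E) : Continuous (f y) := hf.continuous.comp (by fun_prop : Continuous (y, ·))
  have hfderiv : Continuous fun p : E × ℝ => fderiv ℝ (f · p.2) p.1 :=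
    (contDiff_fderiv_curry_left (k := 0) hf (zero_add 1).le).continuous
  have hfderiv_x : Continuous fun t => fderiv ℝ (f · t) x :=
    hfderiv.comp (by fun_prop : Continuous (x, ·))
  obtain ⟨M, hM⟩ := ((isCompact_closedBall x 1).prod (isCompact_uIcc (a := a) (b := b)))
    |>.exists_bound_of_continuousOn hfderiv.continuousOn
  refine intervalIntegral.hasFDerivAt_integral_of_dominated_of_fderiv_le
    (bound := fun _ => M) (Metric.closedBall_mem_nhds x one_pos)
    (.of_forall fun y => (hcont y).aestronglyMeasurable) ((hcont x).intervalIntegrable a b)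
    hfderiv_x.aestronglyMeasurable
    (.of_forall fun t ht y hy => hM (y, t) ⟨hy, Set.uIoc_subset_uIcc ht⟩)
    intervalIntegrable_const
    (.of_forall fun t _ y _ => ?_)
  have hft : ContDiff ℝ 1 (f · t) := hf.comp (by fun_prop : ContDiff ℝ 1 fun y : E => (y, t))
  exact (hft.differentiable one_ne_zero y).hasFDerivAt

theorem contDiff_intervalIntegral {n : ℕ∞} {f : E → ℝ → F}
    (hf : ContDiff ℝ n (Function.uncurry f)) (a b : ℝ) :
    ContDiff ℝ n fun x => ∫ t in a..b, f x t := by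
  induction n using ENat.nat_induction generalizing f with
  | zero =>
    rw [WithTop.coe_zero, contDiff_zero] at hf ⊢
    exact intervalIntegral.continuous_parametric_intervalIntegral_of_continuous' hf a b
  | succ n ih =>
    have hderiv := hasFDerivAt_intervalIntegral_of_contDiff
      (hf.of_le (mod_cast Nat.le_add_left 1 n)) a b
    have hfderiv := contDiff_fderiv_curry_left (k := (n : ℕ∞)) hf le_rfl
    have hfderiv_apply (v : E) :
        ContDiff ℝ (n : ℕ∞) fun x => ∫ t in a..b, fderiv ℝ (f · t) x v :=
      ih (f := fun x t => fderiv ℝ (f · t) x v) (hfderiv.clm_apply contDiff_const)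
    have happly (x v : E) :
        fderiv ℝ (fun x => ∫ t in a..b, f x t) x v = ∫ t in a..b, fderiv ℝ (f · t) x v := by
      have hint : IntervalIntegrable (fun t => fderiv ℝ (f · t) x) MeasureTheory.volume a b :=
        (hfderiv.continuous.comp (by fun_prop : Continuous (x, ·))).intervalIntegrable a b
      rw [(hderiv x).fderiv, ContinuousLinearMap.intervalIntegral_apply hint]
    refine contDiff_succ_iff_fderiv_apply (n := (n : ℕ∞)) |>.2
      ⟨fun x => (hderiv x).differentiableAt, fun h => absurd h WithTop.coe_ne_top, fun v => ?_⟩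
    simpa only [happly] using hfderiv_apply v
  | top ih =>
    exact contDiff_infty.2 fun k => ih k (contDiff_infty.1 hf k)

theorem exists_contDiff_eq_add_apply_sub [CompleteSpace F] {n : ℕ∞} {f : E → F}
    (hf : ContDiff ℝ (n + 1) f) (m : E) :
    ∃ P : E → E →L[ℝ] F, ContDiff ℝ n P ∧ P m = fderiv ℝ f m ∧
      ∀ x, f x = f m + P x (x - m) := by
  have hfderiv : ContDiff ℝ n (fderiv ℝ f) := hf.fderiv_right le_rfl
  have hline (x : E) : Continuous fun t : ℝ => fderiv ℝ f (m + t • (x - m)) :=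
    hfderiv.continuous.comp (by fun_prop)
  refine ⟨fun x => ∫ t in (0 : ℝ)..1, fderiv ℝ f (m + t • (x - m)),
    contDiff_intervalIntegral (hfderiv.comp (by fun_prop)) 0 1, by simp, fun x => ?_⟩
  have hderiv (t : ℝ) : HasDerivAt (fun t : ℝ => f (m + t • (x - m)))
      (fderiv ℝ f (m + t • (x - m)) (x - m)) t := by
    have hγ : HasDerivAt (fun t : ℝ => m + t • (x - m)) (x - m) t := by
      simpa using ((hasDerivAt_id t).smul_const (x - m)).const_add m
    exact (hf.differentiable (by simp) _).hasFDerivAt.comp_hasDerivAt t hγ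
  rw [ContinuousLinearMap.intervalIntegral_apply ((hline x).intervalIntegrable 0 1),
    intervalIntegral.integral_eq_sub_of_hasDerivAt (fun t _ => hderiv t)
      (((hline x).clm_apply continuous_const).intervalIntegrable 0 1)]
  simp

theorem exists_contDiff_symm_bilinear_eq [CompleteSpace F] {n : ℕ∞} {f : E → F} {m : E}
    (hf : ContDiff ℝ (n + 1 + 1) f) (hm : f m = 0) (hm' : fderiv ℝ f m = 0) :
    ∃ C : E → E →L[ℝ] E →L[ℝ] F, ContDiff ℝ n C ∧ (∀ x v w, C x v w = C x w v) ∧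
      ∀ x, f x = C x (x - m) (x - m) := by
  obtain ⟨P, hP, hPm, hfP⟩ := exists_contDiff_eq_add_apply_sub (n := n + 1) hf m
  obtain ⟨D, hD, -, hPD⟩ := exists_contDiff_eq_add_apply_sub hP m
  have hDflip : ContDiff ℝ n fun x => (D x).flip :=
    contDiff_clm_apply_iff.2 fun v => contDiff_clm_apply_iff.2 fun w =>
      (hD.clm_apply contDiff_const).clm_apply contDiff_const
  refine ⟨fun x => (2⁻¹ : ℝ) • (D x + (D x).flip), (hD.add hDflip).const_smul _,
    fun x v w => ?_, fun x => ?_⟩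
  · simp [add_comm]
  · have hquad : f x = D x (x - m) (x - m) := by
      rw [hfP, hm, hPD, hPm, hm', zero_add, zero_add]
    rw [hquad, _root_.smul_apply, _root_.smul_apply, _root_.add_apply,
      _root_.add_apply, ContinuousLinearMap.flip_apply,
      ← two_smul ℝ, inv_smul_smul₀ two_ne_zero]

theorem exists_contDiffAt_symm_bilinear_eq [CompleteSpace F] [CompleteSpace G] {n : ℕ∞}
    {X : E → F} {R : E → G} {m : E} (hX : ContDiff ℝ (n + 1) X) (hR : ContDiff ℝ (n + 1 + 1) R)
    (hXm : X m = 0) (hX' : (fderiv ℝ X m).HasLeftInverse)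
    (hRm : R m = 0) (hR' : fderiv ℝ R m = 0) :
    ∃ B : E → F →L[ℝ] F →L[ℝ] G, ∀ᶠ x in 𝓝 m,
      ContDiffAt ℝ n B x ∧ (∀ v w, B x v w = B x w v) ∧ R x = B x (X x) (X x) := by
  have : CompleteSpace E := FiniteDimensional.complete ℝ E
  obtain ⟨P, hP, hPm, hXP⟩ := exists_contDiff_eq_add_apply_sub hX m
  obtain ⟨C, hC, hCsymm, hRC⟩ := exists_contDiff_symm_bilinear_eq hR hRm hR'
  obtain ⟨Q, hQ⟩ := exists_contDiffAt_leftInverse hP (hPm ▸ hX')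
  refine ⟨fun x => (C x).bilinearComp (Q x) (Q x), ?_⟩
  filter_upwards [hQ] with x ⟨hQx, hQP⟩
  have hQX : Q x (X x) = x - m := by rw [hXP, hXm, zero_add, hQP]
  refine ⟨?_, fun v w => hCsymm x _ _, ?_⟩
  · have hcomp : ContDiffAt ℝ n (fun x => (ContinuousLinearMap.compL ℝ F E G).flip (Q x)) x :=
      (ContinuousLinearMap.contDiff _).contDiffAt.comp x hQx
    exact hcomp.clm_comp (hC.contDiffAt.clm_comp hQx)
  · rw [ContinuousLinearMap.bilinearComp_apply, hQX, hRC]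

theorem exists_contDiff_eventuallyEq {n : ℕ∞} {f : E → F} {s : Set E} {m : E}
    (hf : ContDiffOn ℝ n f s) (hs : s ∈ 𝓝 m) :
    ∃ h : E → F, ContDiff ℝ n h ∧ h =ᶠ[𝓝 m] f := by
  obtain ⟨r, hr, hrs⟩ := Metric.nhds_basis_closedBall.mem_iff.1 (interior_mem_nhds.2 hs)
  let φ : ContDiffBump m := ⟨r / 2, r, half_pos hr, half_lt_self hr⟩
  refine ⟨fun x => φ x • f x, contDiff_iff_contDiffAt.2 fun x => ?_, ?_⟩
  · by_cases hx : x ∈ tsupport φ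
    · rw [φ.tsupport_eq] at hx
      exact φ.contDiffAt.smul (hf.contDiffAt (mem_interior_iff_mem_nhds.1 (hrs hx)))
    · have hzero : (fun x => φ x • f x) =ᶠ[𝓝 x] fun _ => 0 := by
        filter_upwards [notMem_tsupport_iff_eventuallyEq.1 hx] with y hy
        rw [hy, Pi.zero_apply, zero_smul]
      exact contDiffAt_const.congr_of_eventuallyEq hzero
  · filter_upwards [φ.eventuallyEq_one] with x hx
    rw [hx, Pi.one_apply, one_smul]

end Hadamard

section PosDefSolutions

theorem eventually_isHermitian_imp_posDef {ι : Type*} [Finite ι] {A : Matrix ι ι ℝ}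
    (hA : A.PosDef) : ∀ᶠ B in 𝓝 A, B.IsHermitian → B.PosDef := by
  cases nonempty_fintype ι
  have hsphere : ∀ᶠ B in 𝓝 A, ∀ v ∈ Metric.sphere (0 : ι → ℝ) 1, 0 < v ⬝ᵥ B *ᵥ v := by
    refine (isCompact_sphere _ _).eventually_forall_of_forall_eventually fun v hv => ?_
    have hcont : Continuous fun p : Matrix ι ι ℝ × (ι → ℝ) => p.2 ⬝ᵥ p.1 *ᵥ p.2 := by fun_prop
    exact hcont.continuousAt.eventually
      (lt_mem_nhds (hA.dotProduct_mulVec_pos (ne_zero_of_mem_unit_sphere ⟨v, hv⟩)))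
  filter_upwards [hsphere] with B hB hherm
  refine .of_dotProduct_mulVec_pos hherm fun v hv => ?_
  have hnorm : 0 < ‖v‖⁻¹ := inv_pos.2 (norm_pos_iff.2 hv)
  have hscaled := hB (‖v‖⁻¹ • v) (by simp [norm_smul, hv])
  rw [mulVec_smul, smul_dotProduct, dotProduct_smul] at hscaled
  exact pos_of_mul_pos_right (pos_of_mul_pos_right hscaled hnorm.le) hnorm.le

variable {ι : Type*} [Fintype ι]

/-- The positive definite matrices sending `u` to `v`: the constraint that `Y = g X` puts on the
value of `g` at a point where `X` is `u` and `Y` is `v`. -/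
def posDefSolutions (u v : ι → ℝ) : Set (Matrix ι ι ℝ) :=
  {A | A.PosDef ∧ v = A *ᵥ u}

theorem convex_posDefSolutions (u v : ι → ℝ) : Convex ℝ (posDefSolutions u v) := by
  refine convex_iff_forall_pos.2 fun A ⟨hA, hAu⟩ B ⟨hB, hBu⟩ a b ha hb hab => ?_
  refine ⟨(hA.smul ha).add (hB.smul hb), ?_⟩
  rw [add_mulVec, smul_mulVec, smul_mulVec, ← hAu, ← hBu, ← add_smul, hab, one_smul]

theorem dotProduct_pos_of_mem_posDefSolutions {u v : ι → ℝ} {A : Matrix ι ι ℝ}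
    (hA : A ∈ posDefSolutions u v) (hv : v ≠ 0) : 0 < u ⬝ᵥ v := by
  obtain ⟨hpos, rfl⟩ := hA
  exact hpos.dotProduct_mulVec_pos fun hu => hv (by rw [hu, mulVec_zero])

theorem eq_zero_of_mem_posDefSolutions_zero {u : ι → ℝ} {A : Matrix ι ι ℝ}
    (hA : A ∈ posDefSolutions u 0) : u = 0 := by
  by_contra hu
  have hpos := hA.1.dotProduct_mulVec_pos hu
  rw [← hA.2, dotProduct_zero] at hpos
  exact hpos.false

variable [DecidableEq ι]

/-- The orthogonal projection onto the complement of `u`, plus the rank one matrix along `v`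
scaled so that `u` is sent to `v`: an explicit positive definite solution when `0 < u ⬝ᵥ v`. -/
noncomputable def rankOneSolution (u v : ι → ℝ) : Matrix ι ι ℝ :=
  (u ⬝ᵥ v)⁻¹ • vecMulVec v v + (1 - (u ⬝ᵥ u)⁻¹ • vecMulVec u u)

theorem rankOneSolution_mulVec (u v w : ι → ℝ) :
    rankOneSolution u v *ᵥ w =
      ((u ⬝ᵥ v)⁻¹ * (v ⬝ᵥ w)) • v + (w - ((u ⬝ᵥ u)⁻¹ * (u ⬝ᵥ w)) • u) := by
  simp only [rankOneSolution, add_mulVec, sub_mulVec, one_mulVec, smul_mulVec,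
    vecMulVec_mulVec, op_smul_eq_smul, smul_smul]

theorem isHermitian_rankOneSolution (u v : ι → ℝ) : (rankOneSolution u v).IsHermitian := by
  refine .ext fun i j => ?_
  simp only [rankOneSolution, Matrix.add_apply, Matrix.sub_apply, Matrix.smul_apply,
    vecMulVec_apply, one_apply, star_trivial, eq_comm, mul_comm]

theorem dotProduct_rankOneSolution_mulVec {u : ι → ℝ} (hu : u ≠ 0) (v w : ι → ℝ) :
    w ⬝ᵥ rankOneSolution u v *ᵥ w = (u ⬝ᵥ v)⁻¹ * (v ⬝ᵥ w) ^ 2 +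
      (w - ((u ⬝ᵥ u)⁻¹ * (u ⬝ᵥ w)) • u) ⬝ᵥ (w - ((u ⬝ᵥ u)⁻¹ * (u ⬝ᵥ w)) • u) := by
  have huu : u ⬝ᵥ u ≠ 0 := dotProduct_self_eq_zero.not.2 hu
  rw [rankOneSolution_mulVec]
  simp only [dotProduct_add, dotProduct_sub, sub_dotProduct, dotProduct_smul, smul_dotProduct,
    smul_eq_mul, dotProduct_comm u w, dotProduct_comm v w]
  field_simp
  ring

theorem rankOneSolution_mem_posDefSolutions {u v : ι → ℝ} (huv : 0 < u ⬝ᵥ v) :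
    rankOneSolution u v ∈ posDefSolutions u v := by
  have hu : u ≠ 0 := by rintro rfl; simp at huv
  have huu : u ⬝ᵥ u ≠ 0 := dotProduct_self_eq_zero.not.2 hu
  refine ⟨.of_dotProduct_mulVec_pos (isHermitian_rankOneSolution u v) fun w hw => ?_, ?_⟩
  · rw [star_trivial, dotProduct_rankOneSolution_mulVec hu]
    set c := (u ⬝ᵥ u)⁻¹ * (u ⬝ᵥ w)
    by_cases hwu : w = c • u
    · have hc : c ≠ 0 := by rintro hc; exact hw (by rw [hwu, hc, zero_smul])
      have hvw : v ⬝ᵥ w ≠ 0 := by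
        rw [hwu, dotProduct_smul, dotProduct_comm]
        exact mul_ne_zero hc huv.ne'
      have := dotProduct_star_self_nonneg (w - c • u)
      rw [star_trivial] at this
      positivity
    · have := dotProduct_star_self_pos_iff.2 (sub_ne_zero.2 hwu)
      rw [star_trivial] at this
      positivity
  · rw [rankOneSolution_mulVec, dotProduct_comm v u, inv_mul_cancel₀ huv.ne',
      inv_mul_cancel₀ huu, one_smul, one_smul, sub_self, add_zero]

end PosDefSolutions

section Koszul

variable {ι : Type*} [DecidableEq ι] [Fintype ι]

/-- A symmetric matrix, linear in `u`, that sends `u` to the quadratic vector `B u u` when `B` is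
symmetric. The signs are those of the Koszul formula for the Levi-Civita connection. -/
noncomputable def koszulMatrix (B : (ι → ℝ) →L[ℝ] (ι → ℝ) →L[ℝ] (ι → ℝ)) (u : ι → ℝ) :
    Matrix ι ι ℝ :=
  of fun i j => B u (Pi.single j 1) i + B u (Pi.single i 1) j -
    u ⬝ᵥ B (Pi.single i 1) (Pi.single j 1)

theorem koszulMatrix_zero (B : (ι → ℝ) →L[ℝ] (ι → ℝ) →L[ℝ] (ι → ℝ)) : koszulMatrix B 0 = 0 := by
  ext i j
  simp [koszulMatrix]

theorem isHermitian_koszulMatrix {B : (ι → ℝ) →L[ℝ] (ι → ℝ) →L[ℝ] (ι → ℝ)}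
    (hB : ∀ v w, B v w = B w v) (u : ι → ℝ) : (koszulMatrix B u).IsHermitian := by
  refine .ext fun i j => ?_
  simp only [koszulMatrix, of_apply, star_trivial, hB (Pi.single j 1) (Pi.single i 1), add_comm]

theorem koszulMatrix_mulVec_self {B : (ι → ℝ) →L[ℝ] (ι → ℝ) →L[ℝ] (ι → ℝ)}
    (hB : ∀ v w, B v w = B w v) (u : ι → ℝ) : koszulMatrix B u *ᵥ u = B u u := by
  have happly (T : (ι → ℝ) →L[ℝ] (ι → ℝ)) : ∑ j, u j • T (Pi.single j 1) = T u := by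
    simp_rw [← map_smul, ← map_sum, ← Pi.single_smul, smul_eq_mul, mul_one,
      Finset.univ_sum_single]
  ext i
  have hrow : ∑ j, B u (Pi.single j 1) i * u j = B u u i := by
    simp only [← happly (B u), Finset.sum_apply, Pi.smul_apply, smul_eq_mul, mul_comm]
  have hcol : ∑ j, B u (Pi.single i 1) j * u j = B u (Pi.single i 1) ⬝ᵥ u := rfl
  have hthird : ∑ j, (u ⬝ᵥ B (Pi.single i 1) (Pi.single j 1)) * u j =
      B u (Pi.single i 1) ⬝ᵥ u := by
    rw [hB u, dotProduct_comm, ← happly (B _), dotProduct_sum]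
    simp only [dotProduct_smul, smul_eq_mul, mul_comm]
  calc (koszulMatrix B u *ᵥ u) i = ∑ j, koszulMatrix B u i j * u j := rfl
    _ = B u u i := by
      simp only [koszulMatrix, of_apply, sub_mul, add_mul, Finset.sum_sub_distrib,
        Finset.sum_add_distrib]
      rw [hrow, hcol, hthird, add_sub_cancel_right]

end Koszul

section Smoothness

open scoped Matrix.Norms.Elementwise

variable {E ι : Type*} [NormedAddCommGroup E] [NormedSpace ℝ E] [Fintype ι]
  {n : WithTop ℕ∞} {x : E}

theorem contDiffAt_matrix_iff {κ : Type*} [Fintype κ] {A : E → Matrix κ ι ℝ} :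
    ContDiffAt ℝ n A x ↔ ∀ i j, ContDiffAt ℝ n (fun y => A y i j) x :=
  contDiffAt_pi.trans (forall_congr' fun _ => contDiffAt_pi)

theorem contDiffAt_dotProduct {u v : E → ι → ℝ} (hu : ContDiffAt ℝ n u x)
    (hv : ContDiffAt ℝ n v x) : ContDiffAt ℝ n (fun y => u y ⬝ᵥ v y) x :=
  .sum fun k _ => (contDiffAt_pi.1 hu k).mul (contDiffAt_pi.1 hv k)

variable [DecidableEq ι]

theorem contDiffAt_koszulMatrix {B : E → (ι → ℝ) →L[ℝ] (ι → ℝ) →L[ℝ] (ι → ℝ)} {u : E → ι → ℝ}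
    (hB : ContDiffAt ℝ n B x) (hu : ContDiffAt ℝ n u x) :
    ContDiffAt ℝ n (fun y => koszulMatrix (B y) (u y)) x := by
  have hBu (k : ι) : ContDiffAt ℝ n (fun y => B y (u y) (Pi.single k 1)) x :=
    (hB.clm_apply hu).clm_apply contDiffAt_const
  have hBB (i j : ι) : ContDiffAt ℝ n (fun y => B y (Pi.single i 1) (Pi.single j 1)) x :=
    (hB.clm_apply contDiffAt_const).clm_apply contDiffAt_const
  exact contDiffAt_matrix_iff.2 fun i j => ((contDiffAt_pi.1 (hBu j) i).add
    (contDiffAt_pi.1 (hBu i) j)).sub (contDiffAt_dotProduct hu (hBB i j))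

theorem contDiffAt_rankOneSolution {u v : E → ι → ℝ} (hu : ContDiffAt ℝ n u x)
    (hv : ContDiffAt ℝ n v x) (huv : u x ⬝ᵥ v x ≠ 0) :
    ContDiffAt ℝ n (fun y => rankOneSolution (u y) (v y)) x := by
  have hux : u x ≠ 0 := fun h => huv (by rw [h, zero_dotProduct])
  have houter {w : E → ι → ℝ} (hw : ContDiffAt ℝ n w x) :
      ContDiffAt ℝ n (fun y => vecMulVec (w y) (w y)) x :=
    contDiffAt_matrix_iff.2 fun i j => (contDiffAt_pi.1 hw i).mul (contDiffAt_pi.1 hw j)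
  exact (((contDiffAt_dotProduct hu hv).inv huv).smul (houter hv)).add (contDiffAt_const.sub
    (((contDiffAt_dotProduct hu hu).inv (dotProduct_self_eq_zero.not.2 hux)).smul (houter hu)))

end Smoothness

theorem exists_contDiffOn_forall_mem_convex_of_local {E F : Type*} [NormedAddCommGroup E]
    [NormedSpace ℝ E] [FiniteDimensional ℝ E] [NormedAddCommGroup F] [NormedSpace ℝ F] {n : ℕ∞}
    {s : Set E} (hs : IsOpen s) {t : E → Set F} (ht : ∀ x ∈ s, Convex ℝ (t x))
    (hloc : ∀ x ∈ s, ∃ g : E → F, ∀ᶠ y in 𝓝 x, ContDiffAt ℝ n g y ∧ g y ∈ t y) :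
    ∃ g : E → F, ContDiffOn ℝ n g s ∧ ∀ x ∈ s, g x ∈ t x := by
  classical
  let U : TopologicalSpace.Opens E := ⟨s, hs⟩
  have : LocallyCompactSpace U := hs.locallyCompactSpace
  have hlocU (x : U) : ∃ V ∈ 𝓝 x, ∃ g : U → F,
      ContMDiffOn (modelWithCornersSelf ℝ E) (modelWithCornersSelf ℝ F) n g V ∧
        ∀ y ∈ V, g y ∈ t y := by
    obtain ⟨g, hg⟩ := hloc x x.2
    exact ⟨_, continuous_subtype_val.continuousAt hg, fun y => g y, fun y hy =>
      (contMDiffAt_subtype_iff.2 hy.1.contMDiffAt).contMDiffWithinAt, fun y hy => hy.2⟩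
  obtain ⟨g, hg⟩ := exists_contMDiffMap_forall_mem_convex_of_local (modelWithCornersSelf ℝ E)
    (t := fun x : U => t x) (fun x => ht x x.2) hlocU
  let extend (x : E) : F := if h : x ∈ s then g ⟨x, h⟩ else 0
  have hextend : (fun x : U => extend x) = g := funext fun x => dif_pos x.2
  refine ⟨extend, fun x hx => ?_, fun x hx => ?_⟩
  · have hg_at := g.contMDiff ⟨x, hx⟩
    rw [← hextend, contMDiffAt_subtype_iff] at hg_at
    exact hg_at.contDiffAt.contDiffWithinAt
  · exact congrFun hextend ⟨x, hx⟩ ▸ hg ⟨x, hx⟩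

section Characterisation

open scoped Matrix.Norms.Elementwise

variable {E ι : Type*} [NormedAddCommGroup E] [NormedSpace ℝ E] [Fintype ι]
  {X Y : E → ι → ℝ} {m : E}

theorem fderiv_mulVec_of_eq_zero {κ : Type*} [Finite κ] {A : E → Matrix κ ι ℝ}
    (hA : DifferentiableAt ℝ A m) (hX : DifferentiableAt ℝ X m) (hXm : X m = 0) (v : E) :
    fderiv ℝ (fun x => A x *ᵥ X x) m v = A m *ᵥ fderiv ℝ X m v := by
  cases nonempty_fintype κ
  have hAij (i : κ) (j : ι) : DifferentiableAt ℝ (fun x => A x i j) m :=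
    differentiableAt_pi.1 (differentiableAt_pi.1 hA i) j
  have hXj := hasFDerivAt_pi'.1 hX.hasFDerivAt
  have hAX : HasFDerivAt (fun x => A x *ᵥ X x)
      ((A m).mulVecLin.toContinuousLinearMap ∘L fderiv ℝ X m) m := by
    refine hasFDerivAt_pi'.2 fun i => ?_
    refine (HasFDerivAt.fun_sum (u := Finset.univ)
      fun j _ => (hAij i j).hasFDerivAt.mul (hXj j)).congr_fderiv ?_
    ext w
    simp [hXm, mulVec, dotProduct]
  rw [hAX.fderiv]
  rfl

theorem exists_contDiffAt_posDefSolution_of_dotProduct_pos {n : WithTop ℕ∞} {s : Set E}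
    (hs : s ∈ 𝓝 m) (hX : ContDiffOn ℝ n X s) (hY : ContDiffOn ℝ n Y s) (hXY : 0 < X m ⬝ᵥ Y m) :
    ∃ g : E → Matrix ι ι ℝ,
      ∀ᶠ x in 𝓝 m, ContDiffAt ℝ n g x ∧ g x ∈ posDefSolutions (X x) (Y x) := by
  classical
  have hcont : ContinuousAt (fun x => X x ⬝ᵥ Y x) m :=
    (contDiffAt_dotProduct (hX.contDiffAt hs) (hY.contDiffAt hs)).continuousAt
  refine ⟨fun x => rankOneSolution (X x) (Y x), ?_⟩
  filter_upwards [hcont.eventually_const_lt hXY, eventually_mem_nhds_iff.2 hs] with x hpos hsx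
  exact ⟨contDiffAt_rankOneSolution (hX.contDiffAt hsx) (hY.contDiffAt hsx) hpos.ne',
    rankOneSolution_mem_posDefSolutions hpos⟩

variable [FiniteDimensional ℝ E]

theorem exists_contDiffAt_posDefSolution_of_eq_zero_of_contDiff {n : ℕ∞}
    (hX : ContDiff ℝ (n + 1 + 1) X) (hY : ContDiff ℝ (n + 1 + 1) Y) (hXm : X m = 0) (hYm : Y m = 0)
    (hinj : Function.Injective (fderiv ℝ Y m)) {G : Matrix ι ι ℝ} (hG : G.PosDef)
    (hYX : ∀ v, fderiv ℝ Y m v = G *ᵥ fderiv ℝ X m v) :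
    ∃ g : E → Matrix ι ι ℝ,
      ∀ᶠ x in 𝓝 m, ContDiffAt ℝ n g x ∧ g x ∈ posDefSolutions (X x) (Y x) := by
  classical
  have hXdiff : DifferentiableAt ℝ X m := hX.differentiable (by simp) m
  have hXinj : Function.Injective (fderiv ℝ X m) := fun v w hvw =>
    hinj (by rw [hYX, hYX, hvw])
  have hGX : ContDiff ℝ (n + 1 + 1) fun x => G *ᵥ X x :=
    G.mulVecLin.toContinuousLinearMap.contDiff.comp hX
  have hR' : fderiv ℝ (fun x => Y x - G *ᵥ X x) m = 0 := by
    ext1 v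
    rw [fderiv_fun_sub (hY.differentiable (by simp) m) (hGX.differentiable (by simp) m),
      _root_.sub_apply, fderiv_mulVec_of_eq_zero (differentiableAt_const G) hXdiff hXm, hYX,
      sub_self, _root_.zero_apply]
  obtain ⟨B, hB⟩ := exists_contDiffAt_symm_bilinear_eq (hX.of_le le_self_add) (hY.sub hGX) hXm
    (.of_injective_of_finiteDimensional hXinj) (by simp [hXm, hYm]) hR'
  let g (x : E) : Matrix ι ι ℝ := G + koszulMatrix (B x) (X x)
  have hgm : g m = G := by simp only [g, hXm, koszulMatrix_zero, add_zero]
  have hg (x : E) (hBx : ContDiffAt ℝ n B x) : ContDiffAt ℝ n g x :=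
    contDiffAt_const.add (contDiffAt_koszulMatrix hBx
      (hX.contDiffAt.of_le (le_self_add.trans le_self_add)))
  have hpos : ∀ᶠ x in 𝓝 m, (g x).IsHermitian → (g x).PosDef :=
    (hg m hB.self_of_nhds.1).continuousAt.eventually
      (hgm ▸ eventually_isHermitian_imp_posDef hG)
  refine ⟨g, ?_⟩
  filter_upwards [hB, hpos] with x ⟨hBx, hBsymm, hRB⟩ hpos_x
  refine ⟨hg x hBx, hpos_x (hG.isHermitian.add (isHermitian_koszulMatrix hBsymm _)), ?_⟩
  rw [add_mulVec, koszulMatrix_mulVec_self hBsymm, ← hRB, add_sub_cancel]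

theorem exists_contDiffAt_posDefSolution_of_eq_zero {n : ℕ∞} {s : Set E} (hs : s ∈ 𝓝 m)
    (hX : ContDiffOn ℝ (n + 1 + 1) X s) (hY : ContDiffOn ℝ (n + 1 + 1) Y s)
    (hXm : X m = 0) (hYm : Y m = 0) (hinj : Function.Injective (fderiv ℝ Y m))
    {G : Matrix ι ι ℝ} (hG : G.PosDef) (hYX : ∀ v, fderiv ℝ Y m v = G *ᵥ fderiv ℝ X m v) :
    ∃ g : E → Matrix ι ι ℝ,
      ∀ᶠ x in 𝓝 m, ContDiffAt ℝ n g x ∧ g x ∈ posDefSolutions (X x) (Y x) := by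
  obtain ⟨X', hX', hXX'⟩ := exists_contDiff_eventuallyEq (n := n + 1 + 1) hX hs
  obtain ⟨Y', hY', hYY'⟩ := exists_contDiff_eventuallyEq (n := n + 1 + 1) hY hs
  rw [← hYY'.fderiv_eq] at hinj
  simp only [← hYY'.fderiv_eq, ← hXX'.fderiv_eq] at hYX
  obtain ⟨g, hg⟩ := exists_contDiffAt_posDefSolution_of_eq_zero_of_contDiff hX' hY'
    (hXX'.self_of_nhds.trans hXm) (hYY'.self_of_nhds.trans hYm) hinj hG hYX
  refine ⟨g, ?_⟩
  filter_upwards [hg, hXX', hYY'] with x hgx hXx hYx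
  rwa [← hXx, ← hYx]

theorem main_characterisation_general {s : Set E} (hs : IsOpen s)
    (hX : ContDiffOn ℝ ∞ X s) (hY : ContDiffOn ℝ ∞ Y s)
    (hcrit : ∀ m ∈ s, Y m = 0 → Function.Injective (fderiv ℝ Y m)) :
    (∃ g : E → Matrix ι ι ℝ,
      (∀ i j, ContDiffOn ℝ ∞ (fun x => g x i j) s) ∧
      (∀ x ∈ s, (g x).PosDef) ∧
      (∀ x ∈ s, Y x = g x *ᵥ X x))
    ↔
    ((∀ m ∈ s, Y m ≠ 0 → 0 < X m ⬝ᵥ Y m) ∧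
     (∀ m ∈ s, Y m = 0 → X m = 0) ∧
     (∀ m ∈ s, Y m = 0 → ∃ G : Matrix ι ι ℝ, G.PosDef ∧
        ∀ v, fderiv ℝ Y m v = G *ᵥ fderiv ℝ X m v)) := by
  constructor
  · rintro ⟨g, hg, hpos, hYgX⟩
    have hmem (x : E) (hx : x ∈ s) : g x ∈ posDefSolutions (X x) (Y x) := ⟨hpos x hx, hYgX x hx⟩
    have hzero (m : E) (hm : m ∈ s) (hYm : Y m = 0) : X m = 0 :=
      eq_zero_of_mem_posDefSolutions_zero (hYm ▸ hmem m hm)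
    refine ⟨fun m hm => dotProduct_pos_of_mem_posDefSolutions (hmem m hm), hzero,
      fun m hm hYm => ⟨g m, hpos m hm, fun v => ?_⟩⟩
    have hsm := hs.mem_nhds hm
    have hg_m : ContDiffAt ℝ ∞ g m := contDiffAt_matrix_iff.2 fun i j => (hg i j).contDiffAt hsm
    have hYg : Y =ᶠ[𝓝 m] fun x => g x *ᵥ X x := eventually_of_mem hsm hYgX
    rw [hYg.fderiv_eq]
    exact fderiv_mulVec_of_eq_zero (hg_m.differentiableAt (by simp))
      ((hX.contDiffAt hsm).differentiableAt (by simp)) (hzero m hm hYm) v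
  · rintro ⟨hpos, hzero, hderiv⟩
    obtain ⟨g, hg, hmem⟩ := exists_contDiffOn_forall_mem_convex_of_local (n := ⊤) hs
      (t := fun x => posDefSolutions (X x) (Y x)) (fun x _ => convex_posDefSolutions _ _)
      fun m hm => by
        have hsm := hs.mem_nhds hm
        by_cases hYm : Y m = 0
        · obtain ⟨G, hG, hYX⟩ := hderiv m hm hYm
          exact exists_contDiffAt_posDefSolution_of_eq_zero hsm hX hY (hzero m hm hYm) hYm
            (hcrit m hm hYm) hG hYX
        · exact exists_contDiffAt_posDefSolution_of_dotProduct_pos hsm hX hY (hpos m hm hYm)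
    exact ⟨g, fun i j => contDiffOn_pi.1 (contDiffOn_pi.1 hg i) j, fun x hx => (hmem x hx).1,
      fun x hx => (hmem x hx).2⟩

end Characterisation

/-- **Main theorem (coordinate version).**
Let `n ≥ 1`, `Ω ⊆ ℝⁿ` open, and `X Y : Ω → ℝⁿ` smooth. Assume that at every `m ∈ Ω` with
`Y m = 0` the derivative `DY m` is invertible and `X`, `Y` are real analytic on a
neighbourhood of `m`. Then a smooth field of symmetric positive definite matrices `g`
with `Y x = g x · X x` on `Ω` exists iff
(i) `⟨X m, Y m⟩ > 0` whenever `Y m ≠ 0`,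
(ii) `X m = 0` whenever `Y m = 0`, and
(iii) at each zero `m` of `Y` there is a symmetric positive definite `ḡ` with
`DY m v = ḡ · (DX m v)` for all `v`. -/
theorem main_characterisation
    (n : ℕ) (hn : 1 ≤ n) (Ω : Set (Fin n → ℝ)) (hΩ : IsOpen Ω)
    (X Y : (Fin n → ℝ) → (Fin n → ℝ))
    (hX : ContDiffOn ℝ (⊤ : ℕ∞) X Ω) (hY : ContDiffOn ℝ (⊤ : ℕ∞) Y Ω)
    (hcrit : ∀ m ∈ Ω, Y m = 0 →
      Function.Bijective (fderiv ℝ Y m) ∧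
      ∃ V : Set (Fin n → ℝ), IsOpen V ∧ m ∈ V ∧ AnalyticOnNhd ℝ X V ∧ AnalyticOnNhd ℝ Y V) :
    (∃ g : (Fin n → ℝ) → Matrix (Fin n) (Fin n) ℝ,
      (∀ i j, ContDiffOn ℝ (⊤ : ℕ∞) (fun x => g x i j) Ω) ∧
      (∀ x ∈ Ω, (g x).PosDef) ∧
      (∀ x ∈ Ω, Y x = (g x).mulVec (X x)))
    ↔
    ((∀ m ∈ Ω, Y m ≠ 0 → 0 < ∑ i, X m i * Y m i) ∧
     (∀ m ∈ Ω, Y m = 0 → X m = 0) ∧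
     (∀ m ∈ Ω, Y m = 0 → ∃ gbar : Matrix (Fin n) (Fin n) ℝ, gbar.PosDef ∧
        ∀ v : Fin n → ℝ, fderiv ℝ Y m v = gbar.mulVec (fderiv ℝ X m v))) :=
  main_characterisation_general hΩ hX hY fun m hm hYm => (hcrit m hm hYm).1.injective
end

section
/- Let n ≥ 1, let H ∈ Matrix (Fin n) (Fin n) ℝ be symmetric and invertible, and let Λ ∈ Matrix (Fin n) (Fin n) ℝ. Then the following are equivalent: (1) there exists a symmetric positive definite matrix Ḡ ∈ Matrix (Fin n) (Fin n) ℝ such that Λ = Ḡ · H; (2) the bilinear form (z, w) ↦ ⟨H·(Λ·z), w⟩ is symmetric (i.e. ⟨H·(Λ·z), w⟩ = ⟨H·z, Λ·w⟩ for all z, w ∈ ℝⁿ) and positive definite (i.e. ⟨H·(Λ·z), z⟩ > 0 for all z ≠ 0). -/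
/-!
Since `H` is Hermitian, `⟨H z, L w⟩ = ⟨z, H L w⟩`, so condition (2) says exactly that the single
matrix `H L` is positive definite.  Invertibility of `H` makes `G ↦ G H` bijective, and for
`L = G H` the matrix `H L = H G H = Hᴴ G H` is congruent to `G`; congruence by an invertible matrix
preserves positive definiteness in both directions.
-/

open Matrix

theorem forall_star_dotProduct_mulVec_eq_iff {m n R : Type*} [Fintype m] [Fintype n] [Semiring R]
    [StarRing R] {A B : Matrix m n R} :
    (∀ (w : m → R) (z : n → R), star w ⬝ᵥ A *ᵥ z = star w ⬝ᵥ B *ᵥ z) ↔ A = B := by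
  refine ⟨fun h ↦ vecMul_injective (funext fun w ↦ dotProduct_eq _ _ fun z ↦ ?_), ?_⟩
  · simpa only [star_star, dotProduct_mulVec] using h (star w) z
  · rintro rfl _ _
    rfl

theorem star_mulVec_dotProduct_mulVec {k m n R : Type*} [Fintype k] [Fintype m] [Fintype n]
    [NonUnitalSemiring R] [StarRing R] (A : Matrix m k R) (B : Matrix m n R) (w : k → R)
    (z : n → R) : star (A *ᵥ w) ⬝ᵥ B *ᵥ z = star w ⬝ᵥ (Aᴴ * B) *ᵥ z := by
  rw [star_mulVec, ← dotProduct_mulVec, mulVec_mulVec]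

section HermitianLeftFactor

variable {ι R : Type*} [Fintype ι] {H L : Matrix ι ι R}

theorem isHermitian_mul_iff_forall_dotProduct [Semiring R] [StarRing R] (hH : H.IsHermitian) :
    (H * L).IsHermitian ↔
      ∀ w z : ι → R, star w ⬝ᵥ H *ᵥ (L *ᵥ z) = star (L *ᵥ w) ⬝ᵥ H *ᵥ z := by
  simp only [star_mulVec_dotProduct_mulVec, mulVec_mulVec, forall_star_dotProduct_mulVec_eq_iff]
  rw [IsHermitian, conjTranspose_mul, hH.eq, eq_comm]

theorem posDef_mul_iff_forall_dotProduct [Ring R] [PartialOrder R] [StarRing R]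
    (hH : H.IsHermitian) :
    (H * L).PosDef ↔
      (∀ w z : ι → R, star w ⬝ᵥ H *ᵥ (L *ᵥ z) = star (L *ᵥ w) ⬝ᵥ H *ᵥ z) ∧
      ∀ z : ι → R, z ≠ 0 → 0 < star z ⬝ᵥ H *ᵥ (L *ᵥ z) := by
  simp only [posDef_iff_dotProduct_mulVec, isHermitian_mul_iff_forall_dotProduct hH, mulVec_mulVec]

end HermitianLeftFactor

section Factorisation

variable {ι R : Type*} [Fintype ι] [DecidableEq ι] [Ring R] [PartialOrder R] [StarRing R]
  {H : Matrix ι ι R}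

theorem posDef_mul_mul_self_iff (hH : H.IsHermitian) (hHinv : IsUnit H) {G : Matrix ι ι R} :
    (H * (G * H)).PosDef ↔ G.PosDef := by
  simpa only [star_eq_conjTranspose, hH.eq, Matrix.mul_assoc] using
    IsUnit.posDef_star_left_conjugate_iff (x := G) hHinv

theorem exists_posDef_eq_mul_iff (hH : H.IsHermitian) (hHinv : IsUnit H) (L : Matrix ι ι R) :
    (∃ G : Matrix ι ι R, G.PosDef ∧ L = G * H) ↔ (H * L).PosDef := by
  constructor
  · rintro ⟨G, hG, rfl⟩
    exact (posDef_mul_mul_self_iff hH hHinv).2 hG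
  · intro hHL
    obtain ⟨G, rfl⟩ : ∃ G, L = G * H :=
      ((IsUnit.isUnit_iff_mulRight_bijective.1 hHinv).surjective L).imp fun _ ↦ Eq.symm
    exact ⟨G, (posDef_mul_mul_self_iff hH hHinv).1 hHL, rfl⟩

theorem posdef_factorisation_iff_general (hH : H.IsHermitian) (hHinv : IsUnit H)
    (L : Matrix ι ι R) :
    (∃ G : Matrix ι ι R, G.PosDef ∧ L = G * H) ↔
      (∀ w z : ι → R, star w ⬝ᵥ H *ᵥ (L *ᵥ z) = star (L *ᵥ w) ⬝ᵥ H *ᵥ z) ∧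
      ∀ z : ι → R, z ≠ 0 → 0 < star z ⬝ᵥ H *ᵥ (L *ᵥ z) :=
  (exists_posDef_eq_mul_iff hH hHinv L).trans (posDef_mul_iff_forall_dotProduct hH)

end Factorisation

/-- **Reduction of the critical-point compatibility condition to symmetry and
positivity with respect to the Hessian scalar product.**
Let `H` be a symmetric invertible real `n × n` matrix and `Λ` any real `n × n` matrix.
Then there exists a symmetric positive definite `Ḡ` with `Λ = Ḡ · H` iff the bilinear
form `(z, w) ↦ ⟨H·(Λ·z), w⟩` is symmetric and positive definite. -/
theorem posdef_factorisation_iff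
    (n : ℕ) (hn : 1 ≤ n) (H : Matrix (Fin n) (Fin n) ℝ)
    (hHsymm : H.IsSymm) (hHinv : IsUnit H) (L : Matrix (Fin n) (Fin n) ℝ) :
    (∃ Gbar : Matrix (Fin n) (Fin n) ℝ, Gbar.PosDef ∧ L = Gbar * H)
    ↔
    ((∀ z w : Fin n → ℝ,
        ∑ i, H.mulVec (L.mulVec z) i * w i = ∑ i, H.mulVec z i * L.mulVec w i) ∧
     (∀ z : Fin n → ℝ, z ≠ 0 → 0 < ∑ i, H.mulVec (L.mulVec z) i * z i)) := by
  rw [posdef_factorisation_iff_general (isHermitian_iff_isSymm.2 hHsymm) hHinv L, forall_comm]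
  simp only [dotProduct, star_trivial, mul_comm]
end

section
/- Let n ≥ 1 and let σ ∈ Matrix (Fin n) (Fin n) ℂ be positive definite. For B ∈ Matrix (Fin n) (Fin n) ℂ define M̃_σ(B) := ∫₀^∞ (t·I + σ)⁻¹ · B · (t·I + σ)⁻¹ dt (convergent improper Bochner integral). Then for every B, ∫₀¹ σ^{1−s} · M̃_σ(B) · σ^{s} ds = B, where σ^{r} denotes the matrix power of the positive definite matrix σ defined by functional calculus. In other words, the Bogoliubov–Kubo–Mori multiplication operator M_σ(A) := ∫₀¹ σ^{1−s} A σ^{s} ds and M̃_σ are mutually inverse linear operators on Matrix (Fin n) (Fin n) ℂ. -/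
open scoped ComplexOrder Matrix

/-- Real power `σ^r` of a positive definite (Hermitian) matrix, defined by applying the
real power to the eigenvalues in a spectral decomposition. -/
noncomputable def mpow {n : ℕ} (σ : Matrix (Fin n) (Fin n) ℂ) (r : ℝ) :
    Matrix (Fin n) (Fin n) ℂ :=
  if h : σ.IsHermitian then
    (h.eigenvectorUnitary : Matrix (Fin n) (Fin n) ℂ) *
      Matrix.diagonal (fun i => ((h.eigenvalues i ^ r : ℝ) : ℂ)) *
      (h.eigenvectorUnitary : Matrix (Fin n) (Fin n) ℂ)ᴴ
  else 0

/-- The Bogoliubov–Kubo–Mori multiplication operator `M_σ(A) := ∫₀¹ σ^{1−s} A σ^s ds`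
(entrywise Bochner integral). -/
noncomputable def bkmMul {n : ℕ} (σ A : Matrix (Fin n) (Fin n) ℂ) :
    Matrix (Fin n) (Fin n) ℂ :=
  Matrix.of fun i j => ∫ s in (0:ℝ)..1, (mpow σ (1 - s) * A * mpow σ s) i j

/-- The operator `M̃_σ(B) := ∫₀^∞ (t·I + σ)⁻¹ B (t·I + σ)⁻¹ dt`
(entrywise improper Bochner integral). -/
noncomputable def bkmInv {n : ℕ} (σ B : Matrix (Fin n) (Fin n) ℂ) :
    Matrix (Fin n) (Fin n) ℂ :=
  Matrix.of fun i j => ∫ t in Set.Ioi (0:ℝ),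
    (((t : ℂ) • (1 : Matrix (Fin n) (Fin n) ℂ) + σ)⁻¹ * B * ((t : ℂ) • 1 + σ)⁻¹) i j

/-!
In an eigenbasis of `σ`, with eigenvalues `λₖ`, both operators act entrywise: `M_σ` multiplies the
`(k, l)` entry by `∫₀¹ λₖ^{1−s} λₗ^s ds`, and `M̃_σ` multiplies it by
`∫₀^∞ (t + λₖ)⁻¹ (t + λₗ)⁻¹ dt`. The first integral is the logarithmic mean of `λₖ` and `λₗ`, the
second is its reciprocal.
-/

open MeasureTheory Set Filter Topology Matrix

section LogarithmicMean

/-- The logarithmic mean of two positive reals, with the limiting value `a` on the diagonal. The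
BKM operators multiply matrix entries by it and by its inverse; it is meant for `0 < a` and `0 < b`
only. -/
noncomputable def logarithmicMean (a b : ℝ) : ℝ :=
  if a = b then a else (a - b) / (Real.log a - Real.log b)

lemma logarithmicMean_self (a : ℝ) : logarithmicMean a a = a := if_pos rfl

lemma logarithmicMean_of_ne {a b : ℝ} (hab : a ≠ b) :
    logarithmicMean a b = (a - b) / (Real.log a - Real.log b) := if_neg hab

variable {a b : ℝ}

lemma log_sub_log_ne_zero (ha : 0 < a) (hb : 0 < b) (hab : a ≠ b) :
    Real.log a - Real.log b ≠ 0 :=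
  sub_ne_zero.mpr (Real.log_injOn_pos.ne ha hb hab)

lemma logarithmicMean_ne_zero (ha : 0 < a) (hb : 0 < b) : logarithmicMean a b ≠ 0 := by
  rcases eq_or_ne a b with rfl | hab
  · rw [logarithmicMean_self]
    exact ha.ne'
  · rw [logarithmicMean_of_ne hab]
    exact div_ne_zero (sub_ne_zero.mpr hab) (log_sub_log_ne_zero ha hb hab)

lemma continuous_rpow_one_sub_mul_rpow (ha : a ≠ 0) (hb : b ≠ 0) :
    Continuous fun s : ℝ ↦ a ^ (1 - s) * b ^ s :=
  (continuous_const.rpow (by fun_prop) fun _ ↦ .inl ha).mul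
    (continuous_const.rpow continuous_id fun _ ↦ .inl hb)

lemma hasDerivAt_rpow_one_sub_mul_rpow (ha : 0 < a) (hb : 0 < b) (s : ℝ) :
    HasDerivAt (fun s : ℝ ↦ a ^ (1 - s) * b ^ s)
      ((Real.log b - Real.log a) * (a ^ (1 - s) * b ^ s)) s := by
  have hderiv_a : HasDerivAt (fun s : ℝ ↦ a ^ (1 - s)) (Real.log a * (-1) * a ^ (1 - s)) s :=
    ((hasDerivAt_id s).const_sub 1).const_rpow ha
  have hderiv_b : HasDerivAt (fun s : ℝ ↦ b ^ s) (Real.log b * 1 * b ^ s) s :=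
    (hasDerivAt_id s).const_rpow hb
  exact (hderiv_a.fun_mul hderiv_b).congr_deriv (by ring)

lemma integral_rpow_one_sub_mul_rpow (ha : 0 < a) (hb : 0 < b) :
    ∫ s in (0 : ℝ)..1, a ^ (1 - s) * b ^ s = logarithmicMean a b := by
  rcases eq_or_ne a b with rfl | hab
  · simp [logarithmicMean_self, ← Real.rpow_add ha]
  · have hlog := log_sub_log_ne_zero hb ha hab.symm
    have hderiv (s : ℝ) :
        HasDerivAt (fun s : ℝ ↦ a ^ (1 - s) * b ^ s / (Real.log b - Real.log a))
          (a ^ (1 - s) * b ^ s) s :=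
      ((hasDerivAt_rpow_one_sub_mul_rpow ha hb s).div_const _).congr_deriv
        (mul_div_cancel_left₀ _ hlog)
    rw [intervalIntegral.integral_eq_sub_of_hasDerivAt (fun s _ ↦ hderiv s)
      ((continuous_rpow_one_sub_mul_rpow ha.ne' hb.ne').intervalIntegrable 0 1),
      logarithmicMean_of_ne hab, ← neg_div_neg_eq (a - b), neg_sub, neg_sub]
    simp [sub_div]

lemma exists_primitive_inv_add_mul_inv_add (ha : 0 < a) (hb : 0 < b) :
    ∃ F : ℝ → ℝ, (∀ t ∈ Ici (0 : ℝ), HasDerivAt F ((t + a)⁻¹ * (t + b)⁻¹) t) ∧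
      Tendsto F atTop (𝓝 0) ∧ F 0 = -(logarithmicMean a b)⁻¹ := by
  rcases eq_or_ne a b with rfl | hab
  · refine ⟨fun t ↦ -(t + a)⁻¹, fun t ht ↦ ?_, ?_, by simp [logarithmicMean_self]⟩
    · have hta : t + a ≠ 0 := (add_pos_of_nonneg_of_pos ht ha).ne'
      exact (((hasDerivAt_id t).add_const a).fun_inv hta).fun_neg.congr_deriv
        (by simp only [id]; field)
    · simpa using (tendsto_inv_atTop_zero.comp
        (tendsto_atTop_add_const_right atTop a tendsto_id)).neg
  · have hba : b - a ≠ 0 := sub_ne_zero.mpr hab.symm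
    refine ⟨fun t ↦ (Real.log (t + a) - Real.log (t + b)) / (b - a), fun t ht ↦ ?_, ?_, ?_⟩
    · have hta : t + a ≠ 0 := (add_pos_of_nonneg_of_pos ht ha).ne'
      have htb : t + b ≠ 0 := (add_pos_of_nonneg_of_pos ht hb).ne'
      exact ((((hasDerivAt_id t).add_const a).log hta).fun_sub
        (((hasDerivAt_id t).add_const b).log htb)).div_const (b - a) |>.congr_deriv
        (by simp only [id]; field)
    · simpa using ((Real.tendsto_log_comp_add_sub_log a).sub
        (Real.tendsto_log_comp_add_sub_log b)).div_const (b - a)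
    · simp only [logarithmicMean_of_ne hab, inv_div, ← div_neg, neg_sub, zero_add]

lemma inv_add_mul_inv_add_nonneg (ha : 0 < a) (hb : 0 < b) :
    ∀ t ∈ Ioi (0 : ℝ), 0 ≤ (t + a)⁻¹ * (t + b)⁻¹ := by
  rintro t (ht : 0 < t)
  positivity

lemma integrableOn_inv_add_mul_inv_add (ha : 0 < a) (hb : 0 < b) :
    IntegrableOn (fun t : ℝ ↦ (t + a)⁻¹ * (t + b)⁻¹) (Ioi 0) :=
  let ⟨_, hderiv, hlim, _⟩ := exists_primitive_inv_add_mul_inv_add ha hb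
  integrableOn_Ioi_deriv_of_nonneg' hderiv (inv_add_mul_inv_add_nonneg ha hb) hlim

lemma integral_inv_add_mul_inv_add (ha : 0 < a) (hb : 0 < b) :
    ∫ t in Ioi (0 : ℝ), (t + a)⁻¹ * (t + b)⁻¹ = (logarithmicMean a b)⁻¹ := by
  obtain ⟨F, hderiv, hlim, hF0⟩ := exists_primitive_inv_add_mul_inv_add ha hb
  rw [integral_Ioi_of_hasDerivAt_of_nonneg' hderiv (inv_add_mul_inv_add_nonneg ha hb) hlim, hF0,
    zero_sub, neg_neg]

end LogarithmicMean

section DoubleOperatorIntegral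

variable {𝕜 ι : Type*} [RCLike 𝕜] [Fintype ι] [DecidableEq ι] {A : Matrix ι ι 𝕜}

/-- The double operator integral `X ↦ ∑ₖₗ φ(λₖ, λₗ) Pₖ X Pₗ` with symbol `φ` attached to a Hermitian
matrix `A = ∑ₖ λₖ Pₖ`, encoded as entrywise multiplication by `φ(λₖ, λₗ)` in the chosen eigenbasis
of `A`. The symbol `f(a) g(b)` gives `X ↦ f(A) X g(A)`. -/
noncomputable def doubleOperatorIntegral (hA : A.IsHermitian) (φ : ℝ → ℝ → ℝ) (X : Matrix ι ι 𝕜) :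
    Matrix ι ι 𝕜 :=
  Unitary.conjStarAlgAut 𝕜 _ hA.eigenvectorUnitary
    (Matrix.of (fun k l ↦ (φ (hA.eigenvalues k) (hA.eigenvalues l) : 𝕜)) ⊙
      (Unitary.conjStarAlgAut 𝕜 _ hA.eigenvectorUnitary).symm X)

variable (hA : A.IsHermitian)

lemma doubleOperatorIntegral_congr {φ ψ : ℝ → ℝ → ℝ}
    (h : ∀ k l, φ (hA.eigenvalues k) (hA.eigenvalues l) =
      ψ (hA.eigenvalues k) (hA.eigenvalues l)) (X : Matrix ι ι 𝕜) :
    doubleOperatorIntegral hA φ X = doubleOperatorIntegral hA ψ X := by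
  simp only [doubleOperatorIntegral, h]

lemma doubleOperatorIntegral_cancel {φ ψ : ℝ → ℝ → ℝ}
    (h : ∀ k l, φ (hA.eigenvalues k) (hA.eigenvalues l) *
      ψ (hA.eigenvalues k) (hA.eigenvalues l) = 1) (X : Matrix ι ι 𝕜) :
    doubleOperatorIntegral hA φ (doubleOperatorIntegral hA ψ X) = X := by
  have hone : Matrix.of (fun k l ↦ (φ (hA.eigenvalues k) (hA.eigenvalues l) : 𝕜)) ⊙
      Matrix.of (fun k l ↦ (ψ (hA.eigenvalues k) (hA.eigenvalues l) : 𝕜)) = Matrix.of 1 := by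
    ext k l
    simp only [hadamard_apply, of_apply, ← RCLike.ofReal_mul, h, RCLike.ofReal_one, Pi.one_apply]
  rw [doubleOperatorIntegral, doubleOperatorIntegral, StarAlgEquiv.symm_apply_apply,
    ← hadamard_assoc, hone, of_one_hadamard, StarAlgEquiv.apply_symm_apply]

lemma cfc_mul_mul_cfc_eq_doubleOperatorIntegral (f g : ℝ → ℝ) (X : Matrix ι ι 𝕜) :
    hA.cfc f * X * hA.cfc g = doubleOperatorIntegral hA (fun a b ↦ f a * g b) X := by
  set Φ := Unitary.conjStarAlgAut 𝕜 _ hA.eigenvectorUnitary with hΦ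
  calc hA.cfc f * X * hA.cfc g
      = Φ (Matrix.diagonal (RCLike.ofReal ∘ f ∘ hA.eigenvalues) * Φ.symm X *
          Matrix.diagonal (RCLike.ofReal ∘ g ∘ hA.eigenvalues)) := by
        rw [map_mul, map_mul, StarAlgEquiv.apply_symm_apply]
        rfl
    _ = doubleOperatorIntegral hA (fun a b ↦ f a * g b) X := by
        rw [doubleOperatorIntegral, ← hΦ]
        congr 1
        ext k l
        simp only [mul_diagonal, diagonal_mul, hadamard_apply, of_apply, Function.comp_apply,
          RCLike.ofReal_mul]
        ring

lemma inv_smul_one_add_eq_cfc {t : ℝ} (ht : ∀ k, t + hA.eigenvalues k ≠ 0) :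
    ((t : 𝕜) • (1 : Matrix ι ι 𝕜) + A)⁻¹ = hA.cfc fun x ↦ (t + x)⁻¹ := by
  have hA' : IsSelfAdjoint A := hA
  have hspec : ∀ x ∈ spectrum ℝ A, t + x ≠ 0 := by
    rw [hA.spectrum_real_eq_range_eigenvalues]
    rintro _ ⟨k, rfl⟩
    exact ht k
  rw [← hA.cfc_eq, cfc_inv (fun x ↦ t + x) A hspec, cfc_const_add t (fun x ↦ x) A, cfc_id' ℝ A,
    nonsing_inv_eq_ringInverse, Algebra.algebraMap_eq_smul_one,
    RCLike.real_smul_eq_coe_smul (K := 𝕜)]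

lemma doubleOperatorIntegral_apply (φ : ℝ → ℝ → ℝ) (X : Matrix ι ι 𝕜) (i j : ι) :
    doubleOperatorIntegral hA φ X i j =
      ∑ l, ∑ k, (φ (hA.eigenvalues k) (hA.eigenvalues l) : 𝕜) *
        ((hA.eigenvectorUnitary : Matrix ι ι 𝕜) i k *
          (Unitary.conjStarAlgAut 𝕜 _ hA.eigenvectorUnitary).symm X k l *
          star (hA.eigenvectorUnitary : Matrix ι ι 𝕜) l j) := by
  simp only [doubleOperatorIntegral, Unitary.conjStarAlgAut_apply, mul_apply, Finset.sum_mul,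
    hadamard_apply, of_apply]
  refine Finset.sum_congr rfl fun l _ ↦ Finset.sum_congr rfl fun k _ ↦ ?_
  ring

variable {Ω : Type*} [MeasurableSpace Ω] {μ : Measure Ω} {φ : Ω → ℝ → ℝ → ℝ}

lemma integrable_doubleOperatorIntegral_apply
    (hφ : ∀ k l, Integrable (fun ω ↦ φ ω (hA.eigenvalues k) (hA.eigenvalues l)) μ)
    (X : Matrix ι ι 𝕜) (i j : ι) :
    Integrable (fun ω ↦ doubleOperatorIntegral hA (φ ω) X i j) μ := by
  simp only [doubleOperatorIntegral_apply]
  exact integrable_finsetSum _ fun l _ ↦ integrable_finsetSum _ fun k _ ↦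
    (hφ k l).ofReal.mul_const _

lemma integral_doubleOperatorIntegral_apply
    (hφ : ∀ k l, Integrable (fun ω ↦ φ ω (hA.eigenvalues k) (hA.eigenvalues l)) μ)
    (X : Matrix ι ι 𝕜) (i j : ι) :
    ∫ ω, doubleOperatorIntegral hA (φ ω) X i j ∂μ =
      doubleOperatorIntegral hA (fun a b ↦ ∫ ω, φ ω a b ∂μ) X i j := by
  simp only [doubleOperatorIntegral_apply]
  rw [integral_finsetSum _ fun l _ ↦ integrable_finsetSum _ fun k _ ↦
    (hφ k l).ofReal.mul_const _]
  refine Finset.sum_congr rfl fun l _ ↦ ?_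
  rw [integral_finsetSum _ fun k _ ↦ (hφ k l).ofReal.mul_const _]
  simp only [integral_mul_const, integral_ofReal]

lemma resolvent_mul_mul_resolvent_eq_doubleOperatorIntegral (hA : A.PosDef) {t : ℝ} (ht : 0 ≤ t)
    (X : Matrix ι ι 𝕜) :
    ((t : 𝕜) • (1 : Matrix ι ι 𝕜) + A)⁻¹ * X * ((t : 𝕜) • 1 + A)⁻¹ =
      doubleOperatorIntegral hA.isHermitian (fun a b ↦ (t + a)⁻¹ * (t + b)⁻¹) X := by
  rw [inv_smul_one_add_eq_cfc hA.isHermitian fun k ↦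
    (add_pos_of_nonneg_of_pos ht (hA.eigenvalues_pos k)).ne',
    cfc_mul_mul_cfc_eq_doubleOperatorIntegral]

lemma integrableOn_resolvent_mul_mul_resolvent_apply (hA : A.PosDef) (X : Matrix ι ι 𝕜)
    (i j : ι) :
    IntegrableOn
      (fun t : ℝ ↦ (((t : 𝕜) • (1 : Matrix ι ι 𝕜) + A)⁻¹ * X * ((t : 𝕜) • 1 + A)⁻¹) i j)
      (Ioi 0) := by
  have hpos := hA.eigenvalues_pos
  have hint : IntegrableOn (fun t : ℝ ↦
      doubleOperatorIntegral hA.isHermitian (fun a b ↦ (t + a)⁻¹ * (t + b)⁻¹) X i j) (Ioi 0) :=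
    integrable_doubleOperatorIntegral_apply (φ := fun t a b ↦ (t + a)⁻¹ * (t + b)⁻¹) _
      (fun k l ↦ integrableOn_inv_add_mul_inv_add (hpos k) (hpos l)) X i j
  exact hint.congr_fun (fun t (ht : 0 < t) ↦ congrFun₂
    (resolvent_mul_mul_resolvent_eq_doubleOperatorIntegral hA ht.le X).symm i j) measurableSet_Ioi

end DoubleOperatorIntegral

section BKM

variable {n : ℕ} {σ : Matrix (Fin n) (Fin n) ℂ}

lemma mpow_eq_cfc (hσ : σ.IsHermitian) (r : ℝ) : mpow σ r = hσ.cfc (· ^ r) :=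
  dif_pos hσ

lemma bkmMul_eq_doubleOperatorIntegral (hσ : σ.PosDef) (A : Matrix (Fin n) (Fin n) ℂ) :
    bkmMul σ A = doubleOperatorIntegral hσ.isHermitian logarithmicMean A := by
  have hpos := hσ.eigenvalues_pos
  ext i j
  calc bkmMul σ A i j
      = ∫ s in Ioc (0 : ℝ) 1,
          doubleOperatorIntegral hσ.isHermitian (fun a b ↦ a ^ (1 - s) * b ^ s) A i j := by
        simp only [bkmMul, of_apply, mpow_eq_cfc hσ.isHermitian,
          cfc_mul_mul_cfc_eq_doubleOperatorIntegral, intervalIntegral.integral_of_le zero_le_one]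
    _ = doubleOperatorIntegral hσ.isHermitian
          (fun a b ↦ ∫ s in (0 : ℝ)..1, a ^ (1 - s) * b ^ s) A i j := by
        simp only [intervalIntegral.integral_of_le zero_le_one]
        exact integral_doubleOperatorIntegral_apply (φ := fun s a b ↦ a ^ (1 - s) * b ^ s) _
          (fun k l ↦ (continuous_rpow_one_sub_mul_rpow (hpos k).ne' (hpos l).ne').integrableOn_Ioc)
          A i j
    _ = doubleOperatorIntegral hσ.isHermitian logarithmicMean A i j :=
        congrFun₂ (doubleOperatorIntegral_congr _
          (fun k l ↦ integral_rpow_one_sub_mul_rpow (hpos k) (hpos l)) A) i j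

lemma bkmInv_eq_doubleOperatorIntegral (hσ : σ.PosDef) (B : Matrix (Fin n) (Fin n) ℂ) :
    bkmInv σ B = doubleOperatorIntegral hσ.isHermitian (fun a b ↦ (logarithmicMean a b)⁻¹) B := by
  have hpos := hσ.eigenvalues_pos
  ext i j
  calc bkmInv σ B i j
      = ∫ t in Ioi (0 : ℝ),
          doubleOperatorIntegral hσ.isHermitian (fun a b ↦ (t + a)⁻¹ * (t + b)⁻¹) B i j :=
        setIntegral_congr_fun measurableSet_Ioi fun t (ht : 0 < t) ↦ congrFun₂
          (resolvent_mul_mul_resolvent_eq_doubleOperatorIntegral hσ ht.le B) i j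
    _ = doubleOperatorIntegral hσ.isHermitian
          (fun a b ↦ ∫ t in Ioi (0 : ℝ), (t + a)⁻¹ * (t + b)⁻¹) B i j :=
        integral_doubleOperatorIntegral_apply (φ := fun t a b ↦ (t + a)⁻¹ * (t + b)⁻¹) _
          (fun k l ↦ integrableOn_inv_add_mul_inv_add (hpos k) (hpos l)) B i j
    _ = doubleOperatorIntegral hσ.isHermitian (fun a b ↦ (logarithmicMean a b)⁻¹) B i j :=
        congrFun₂ (doubleOperatorIntegral_congr _
          (fun k l ↦ integral_inv_add_mul_inv_add (hpos k) (hpos l)) B) i j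

end BKM

/-- **The BKM multiplication operator and its integral inverse are mutually inverse.**
For positive definite `σ`, the improper integral defining `M̃_σ(B)` converges absolutely,
and `∫₀¹ σ^{1−s}·M̃_σ(B)·σ^s ds = B`; moreover `M̃_σ(M_σ(B)) = B`, i.e. `M_σ` and `M̃_σ`
are mutually inverse linear operators on `Matrix (Fin n) (Fin n) ℂ`. -/
theorem bkm_operators_mutually_inverse
    (n : ℕ) (hn : 1 ≤ n) (σ : Matrix (Fin n) (Fin n) ℂ) (hσ : σ.PosDef)
    (B : Matrix (Fin n) (Fin n) ℂ) :
    (∀ i j, MeasureTheory.IntegrableOn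
      (fun t : ℝ =>
        (((t : ℂ) • (1 : Matrix (Fin n) (Fin n) ℂ) + σ)⁻¹ * B * ((t : ℂ) • 1 + σ)⁻¹) i j)
      (Set.Ioi 0)) ∧
    bkmMul σ (bkmInv σ B) = B ∧
    bkmInv σ (bkmMul σ B) = B := by
  have hpos := hσ.eigenvalues_pos
  refine ⟨integrableOn_resolvent_mul_mul_resolvent_apply hσ B, ?_, ?_⟩
  · rw [bkmInv_eq_doubleOperatorIntegral hσ, bkmMul_eq_doubleOperatorIntegral hσ]
    exact doubleOperatorIntegral_cancel _
      (fun k l ↦ mul_inv_cancel₀ (logarithmicMean_ne_zero (hpos k) (hpos l))) B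
  · rw [bkmInv_eq_doubleOperatorIntegral hσ, bkmMul_eq_doubleOperatorIntegral hσ]
    exact doubleOperatorIntegral_cancel _
      (fun k l ↦ inv_mul_cancel₀ (logarithmicMean_ne_zero (hpos k) (hpos l))) B
end
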